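/- arXiv:2407.10697 — 2 statements merged into one kernel-verified Lean document; each statement's English description precedes it below -/
import Mathlib

section
/- Fix angles 0 < θ < θ' ≤ π/2 and n ≥ 3. Let g:[−1,1]→ℝ satisfy the Delsarte linear programming conditions for M(n−1,θ'), and let F:[−1,1]→ℝ be bounded measurable with ∫_{−1}^1 F(t)(1−t²)^{(n−3)/2}dt ≠ 0. For z ∈ S^{n−1} let Π_z(w) := (w−⟨w,z⟩z)/|w−⟨w,z⟩z|, and suppose the function H(x,y) := ∫_{S^{n−1}} F(⟨x,z⟩)F(⟨y,z⟩)·g(⟨Π_z(x),Π_z(y)⟩) dz (integration with respect to the rotation-invariant probability measure on S^{n−1}; H depends only on t = ⟨x,y⟩) satisfies H(t) ≤ 0 for all t ∈ [−1, cos θ]. Then M(n,θ) ≤ [g(1)·∫_{−1}^1(1−t²)^{(n−4)/2}dt / ∫_{−1}^1 g(t)(1−t²)^{(n−4)/2}dt] · [∫_{−1}^1 F(t)²(1−t²)^{(n−3)/2}dt · ∫_{−1}^1(1−t²)^{(n−3)/2}dt / (∫_{−1}^1 F(t)(1−t²)^{(n−3)/2}dt)²]. -/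
open MeasureTheory Filter Real
open scoped RealInnerProductSpace

noncomputable section

/-- `g` is positive semi-definite on the unit sphere `S^{N-1} ⊂ ℝ^N`. -/
def PosSemidefOnSphere (N : ℕ) (g : ℝ → ℝ) : Prop :=
  ∀ (M : ℕ) (w : Fin M → EuclideanSpace ℝ (Fin N)) (c : Fin M → ℝ),
    (∀ i, ‖w i‖ = 1) → 0 ≤ ∑ i, ∑ j, c i * c j * g ⟪w i, w j⟫

/-- `g` satisfies the Delsarte linear programming conditions for `M(N, θ)`. -/
def DelsarteLP (N : ℕ) (θ : ℝ) (g : ℝ → ℝ) : Prop :=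
  PosSemidefOnSphere N g ∧ (∀ t ∈ Set.Icc (-1 : ℝ) (Real.cos θ), g t ≤ 0) ∧
    0 < ∫ t in (-1 : ℝ)..1, g t * (1 - t ^ 2) ^ (((N : ℝ) - 3) / 2)

/-- The maximal size `M(n, θ)` of a `θ`-spherical code in `S^{n-1}`. -/
def Mcode (n : ℕ) (θ : ℝ) : ℕ :=
  sSup {N : ℕ | ∃ A : Finset (EuclideanSpace ℝ (Fin n)), A.card = N ∧
    (∀ x ∈ A, ‖x‖ = 1) ∧ ∀ x ∈ A, ∀ y ∈ A, x ≠ y → ⟪x, y⟫ ≤ Real.cos θ}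

/-- Normalized projection `Π_z(w)` of `w` onto the orthogonal complement of `z`. -/
def projZ {n : ℕ} (z w : EuclideanSpace ℝ (Fin n)) : EuclideanSpace ℝ (Fin n) :=
  ‖w - ⟪w, z⟫ • z‖⁻¹ • (w - ⟪w, z⟫ • z)

/-- `σ` is the rotation-invariant probability measure on `S^{n-1}`. -/
def IsInvProbSphere (n : ℕ)
    (σ : Measure (Metric.sphere (0 : EuclideanSpace ℝ (Fin n)) 1)) : Prop :=
  IsProbabilityMeasure σ ∧
    ∀ A : EuclideanSpace ℝ (Fin n) ≃ₗᵢ[ℝ] EuclideanSpace ℝ (Fin n),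
      Measure.map (fun z : Metric.sphere (0 : EuclideanSpace ℝ (Fin n)) 1 =>
        (⟨A z.1, by
          rw [Metric.mem_sphere, dist_zero_right, A.norm_map, ← dist_zero_right]
          exact z.2⟩ : Metric.sphere (0 : EuclideanSpace ℝ (Fin n)) 1)) σ = σ


/-- A function pulls back null sets to null sets away from its critical points. -/
lemma aux_null_preimage (f : ℝ → ℝ) (B : Set ℝ) (hB : volume B = 0) :
    volume {x | f x ∈ B ∧ ∃ c, c ≠ 0 ∧ HasDerivAt f c x} = 0 := by
  set s := {x | f x ∈ B ∧ ∃ c, c ≠ 0 ∧ HasDerivAt f c x} with hs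
  let S : ℕ → ℤ → Set ℝ := fun m k =>
    {x | x ∈ s ∧ (∀ y, |y - x| < 1 / ((m : ℝ) + 1) → |y - x| ≤ ((m : ℝ) + 1) * |f y - f x|) ∧
      ⌊x * ((m : ℝ) + 1)⌋ = k}
  have hcov : s ⊆ ⋃ m, ⋃ k, S m k := by
    rintro x hx
    obtain ⟨hxB, c, hc, hd⟩ := hx
    have hc' : 0 < |c| := abs_pos.mpr hc
    have h1 := (hasDerivAt_iff_isLittleO.mp hd).def (half_pos hc')
    obtain ⟨ε, hε, h2⟩ := Metric.eventually_nhds_iff.mp h1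
    obtain ⟨m, hm⟩ := exists_nat_gt (max (1 / ε) (2 / |c|))
    have hm1 : 1 / ε < (m : ℝ) + 1 := by linarith [le_max_left (1 / ε) (2 / |c|)]
    have hm2 : 2 / |c| < (m : ℝ) + 1 := by linarith [le_max_right (1 / ε) (2 / |c|)]
    have hmp : (0 : ℝ) < (m : ℝ) + 1 := by positivity
    refine Set.mem_iUnion.mpr ⟨m, Set.mem_iUnion.mpr ⟨_, ⟨hxB, c, hc, hd⟩, ?_, rfl⟩⟩
    intro y hy
    have hye : dist y x < ε := by
      rw [Real.dist_eq]
      refine hy.trans ?_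
      rw [div_lt_iff₀ hmp]
      rw [div_lt_iff₀ hε] at hm1
      linarith
    have h3 := h2 hye
    simp only [Real.norm_eq_abs, smul_eq_mul] at h3
    have h4 : |(y - x) * c| ≤ |f y - f x - (y - x) * c| + |f y - f x| := by
      have : (y - x) * c = -(f y - f x - (y - x) * c) + (f y - f x) := by ring
      calc |(y - x) * c| = |-(f y - f x - (y - x) * c) + (f y - f x)| := by rw [← this]
        _ ≤ _ := (abs_add_le _ _).trans (by rw [abs_neg])
    rw [abs_mul] at h4
    have h5 : |y - x| * (|c| / 2) ≤ |f y - f x| := by linarith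
    rw [div_lt_iff₀ hc'] at hm2
    nlinarith [abs_nonneg (y - x), abs_nonneg (f y - f x)]
  refine measure_mono_null hcov ?_
  rw [measure_iUnion_null_iff]; intro m
  rw [measure_iUnion_null_iff]; intro k
  have hmp : (0 : ℝ) < (m : ℝ) + 1 := by positivity
  have hanti : AntilipschitzWith (Real.toNNReal ((m : ℝ) + 1)) (fun x : S m k => f x) := by
    refine AntilipschitzWith.of_le_mul_dist ?_
    rintro ⟨x, hx⟩ ⟨y, hy⟩
    rw [Real.coe_toNNReal _ hmp.le, Subtype.dist_eq, Real.dist_eq, Real.dist_eq]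
    refine hy.2.1 x ?_
    have := Int.abs_sub_lt_one_of_floor_eq_floor (hx.2.2.trans hy.2.2.symm)
    rw [← sub_mul, abs_mul, abs_of_pos hmp] at this
    rwa [lt_div_iff₀ hmp]
  have h := hanti.le_hausdorffMeasure_image (d := 1) zero_le_one Set.univ
  have h0 : (μH[1] : Measure ℝ) ((fun x : S m k => f x) '' Set.univ) = 0 := by
    rw [hausdorffMeasure_real]
    refine measure_mono_null ?_ hB
    rintro _ ⟨⟨x, hx⟩, -, rfl⟩
    exact hx.1.1
  rw [h0, mul_zero, nonpos_iff_eq_zero] at h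
  have h' := (isometry_subtype_coe (s := S m k)).hausdorffMeasure_image (d := 1)
    (Or.inl zero_le_one) Set.univ
  rw [h, Set.image_univ, Subtype.range_coe, hausdorffMeasure_real] at h'
  exact h'

lemma aux_exists_rot {n : ℕ} (u w : EuclideanSpace ℝ (Fin n)) (hu : ‖u‖ = 1) (hw : ‖w‖ = 1)
    (huw : ⟪u, w⟫ = 0) (α : ℝ) :
    ∃ A : EuclideanSpace ℝ (Fin n) ≃ₗᵢ[ℝ] EuclideanSpace ℝ (Fin n), ∀ v,
      A v = v + (cos α * ⟪u, v⟫ - sin α * ⟪w, v⟫ - ⟪u, v⟫) • u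
        + (sin α * ⟪u, v⟫ + cos α * ⟪w, v⟫ - ⟪w, v⟫) • w := by
  let L : EuclideanSpace ℝ (Fin n) →ₗ[ℝ] EuclideanSpace ℝ (Fin n) :=
    { toFun := fun v => v + (cos α * ⟪u, v⟫ - sin α * ⟪w, v⟫ - ⟪u, v⟫) • u
        + (sin α * ⟪u, v⟫ + cos α * ⟪w, v⟫ - ⟪w, v⟫) • w
      map_add' := by intro x y; simp only [inner_add_right]; module
      map_smul' := by
        intro r x
        simp only [inner_smul_right, RingHom.id_apply]; module }
  let I : EuclideanSpace ℝ (Fin n) →ₗᵢ[ℝ] EuclideanSpace ℝ (Fin n) :=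
    { L with
      norm_map' := by
        intro v
        change ‖v + (cos α * ⟪u, v⟫ - sin α * ⟪w, v⟫ - ⟪u, v⟫) • u
        + (sin α * ⟪u, v⟫ + cos α * ⟪w, v⟫ - ⟪w, v⟫) • w‖ = ‖v‖
        have huu : ⟪u, u⟫ = 1 := by rw [real_inner_self_eq_norm_sq, hu]; norm_num
        have hww : ⟪w, w⟫ = 1 := by rw [real_inner_self_eq_norm_sq, hw]; norm_num
        have hwu : ⟪w, u⟫ = 0 := by rw [real_inner_comm]; exact huw
        rw [← sq_eq_sq₀ (norm_nonneg _) (norm_nonneg _), ← real_inner_self_eq_norm_sq,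
          ← real_inner_self_eq_norm_sq]
        simp only [inner_add_left, inner_add_right, inner_smul_left, inner_smul_right, huu, hww,
          huw, hwu, real_inner_comm u v, real_inner_comm w v, conj_trivial]
        have := Real.sin_sq_add_cos_sq α
        linear_combination (⟪u, v⟫ ^ 2 + ⟪w, v⟫ ^ 2) * this }
  exact ⟨I.toLinearIsometryEquiv rfl, fun v => rfl⟩

/-- A rotation invariant probability measure on `ℝ^n` concentrated on the unit sphere. -/
structure AuxSph {n : ℕ} (ν : Measure (EuclideanSpace ℝ (Fin n))) : Prop where
  prob : IsProbabilityMeasure ν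
  norm : ∀ᵐ z ∂ν, ‖z‖ = 1
  inv : ∀ A : EuclideanSpace ℝ (Fin n) ≃ₗᵢ[ℝ] EuclideanSpace ℝ (Fin n), ν.map A = ν

lemma AuxSph.mp {n : ℕ} {ν : Measure (EuclideanSpace ℝ (Fin n))} (h : AuxSph ν)
    (A : EuclideanSpace ℝ (Fin n) ≃ₗᵢ[ℝ] EuclideanSpace ℝ (Fin n)) : MeasurePreserving A ν ν :=
  ⟨A.continuous.measurable, h.inv A⟩

lemma AuxSph.integral_comp {n : ℕ} {ν : Measure (EuclideanSpace ℝ (Fin n))} (h : AuxSph ν)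
    (A : EuclideanSpace ℝ (Fin n) ≃ₗᵢ[ℝ] EuclideanSpace ℝ (Fin n))
    (f : EuclideanSpace ℝ (Fin n) → ℝ) : ∫ z, f (A z) ∂ν = ∫ z, f z ∂ν :=
  (h.mp A).integral_comp A.toHomeomorph.measurableEmbedding f

lemma AuxSph.abs_inner_le {n : ℕ} {ν : Measure (EuclideanSpace ℝ (Fin n))} (h : AuxSph ν)
    (u : EuclideanSpace ℝ (Fin n)) (hu : ‖u‖ = 1) : ∀ᵐ z ∂ν, |⟪u, z⟫| ≤ 1 := by
  filter_upwards [h.norm] with z hz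
  have := abs_real_inner_le_norm u z
  rwa [hu, hz, one_mul] at this

lemma AuxSph.moment_rot {n : ℕ} {ν : Measure (EuclideanSpace ℝ (Fin n))} (h : AuxSph ν)
    (u w : EuclideanSpace ℝ (Fin n)) (hu : ‖u‖ = 1) (hw : ‖w‖ = 1)
    (huw : ⟪u, w⟫ = 0) (m : ℕ) :
    ((m : ℝ) + 1) * ∫ z, ⟪u, z⟫ ^ m * ⟪w, z⟫ ^ 2 ∂ν = ∫ z, ⟪u, z⟫ ^ (m + 2) ∂ν := by
  have := h.prob
  let G : ℝ → EuclideanSpace ℝ (Fin n) → ℝ := fun α z =>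
    (cos α * ⟪u, z⟫ - sin α * ⟪w, z⟫) ^ (m + 1) * (sin α * ⟪u, z⟫ + cos α * ⟪w, z⟫)
  let G' : ℝ → EuclideanSpace ℝ (Fin n) → ℝ := fun α z =>
    (((m + 1 : ℕ) : ℝ) * (cos α * ⟪u, z⟫ - sin α * ⟪w, z⟫) ^ m *
      (-sin α * ⟪u, z⟫ - cos α * ⟪w, z⟫)) * (sin α * ⟪u, z⟫ + cos α * ⟪w, z⟫) +
    (cos α * ⟪u, z⟫ - sin α * ⟪w, z⟫) ^ (m + 1) * (cos α * ⟪u, z⟫ + -sin α * ⟪w, z⟫)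
  have hGc : ∀ α, Continuous (G α) := fun α => by
    simp only [G]; fun_prop
  have hG'c : ∀ α, Continuous (G' α) := fun α => by
    simp only [G']; fun_prop
  have hb : ∀ α p q : ℝ, |p| ≤ 1 → |q| ≤ 1 → |cos α * p - sin α * q| ≤ 2 ∧
      |sin α * p + cos α * q| ≤ 2 ∧ |-sin α * p - cos α * q| ≤ 2 ∧
      |cos α * p + -sin α * q| ≤ 2 := by
    intro α p q hp hq
    have h1 : |cos α * p| ≤ 1 := by
      rw [abs_mul]; exact mul_le_one₀ (abs_cos_le_one α) (abs_nonneg _) hp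
    have h2 : |sin α * p| ≤ 1 := by
      rw [abs_mul]; exact mul_le_one₀ (abs_sin_le_one α) (abs_nonneg _) hp
    have h3 : |cos α * q| ≤ 1 := by
      rw [abs_mul]; exact mul_le_one₀ (abs_cos_le_one α) (abs_nonneg _) hq
    have h4 : |sin α * q| ≤ 1 := by
      rw [abs_mul]; exact mul_le_one₀ (abs_sin_le_one α) (abs_nonneg _) hq
    rw [abs_le] at h1 h2 h3 h4
    refine ⟨?_, ?_, ?_, ?_⟩ <;> rw [abs_le] <;> constructor <;> linarith [h1.1, h1.2]
  have hconst : ∀ α, ∫ z, G α z ∂ν = ∫ z, G 0 z ∂ν := by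
    intro α
    obtain ⟨A, hA⟩ := aux_exists_rot u w hu hw huw α
    rw [← h.integral_comp A (G 0)]
    congr 1; ext z
    have huu : ⟪u, u⟫ = 1 := by rw [real_inner_self_eq_norm_sq, hu]; norm_num
    have hww : ⟪w, w⟫ = 1 := by rw [real_inner_self_eq_norm_sq, hw]; norm_num
    have hwu : ⟪w, u⟫ = 0 := by rw [real_inner_comm]; exact huw
    simp only [G, hA, inner_add_right, inner_smul_right, huu, hww, huw, hwu, cos_zero, sin_zero]
    ring
  have key := (hasDerivAt_integral_of_dominated_loc_of_deriv_le (μ := ν) (F := G) (F' := G')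
    (x₀ := 0) (s := Set.univ)
    (bound := fun _ => ((m + 1 : ℕ) : ℝ) * 2 ^ m * 2 * 2 + 2 ^ (m + 1) * 2) univ_mem
    (Eventually.of_forall fun α => (hGc α).aestronglyMeasurable) ?_
    (hG'c 0).aestronglyMeasurable ?_ (integrable_const _) ?_).2
  · have h0 : HasDerivAt (fun α => ∫ z, G α z ∂ν) 0 0 := by
      have : (fun α => ∫ z, G α z ∂ν) = fun _ => ∫ z, G 0 z ∂ν := funext hconst
      rw [this]; exact hasDerivAt_const _ _
    have h1 := key.unique h0
    have h2 : ∀ z, G' 0 z = ⟪u, z⟫ ^ (m + 2) - ((m : ℝ) + 1) * (⟪u, z⟫ ^ m * ⟪w, z⟫ ^ 2) := by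
      intro z; simp only [G', cos_zero, sin_zero]; push_cast; ring
    simp_rw [h2] at h1
    rw [integral_sub, integral_const_mul] at h1
    · linarith
    · refine Integrable.of_bound (C := 1) (by fun_prop) ?_
      filter_upwards [h.abs_inner_le u hu] with z hz
      rw [norm_pow]; exact pow_le_one₀ (norm_nonneg _) hz
    · refine Integrable.const_mul (Integrable.of_bound (C := 1) (by fun_prop) ?_) _
      filter_upwards [h.abs_inner_le u hu, h.abs_inner_le w hw] with z hz hz'
      rw [norm_mul, norm_pow, norm_pow]
      exact mul_le_one₀ (pow_le_one₀ (norm_nonneg _) hz) (by positivity)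
        (pow_le_one₀ (norm_nonneg _) hz')
  · refine Integrable.of_bound (C := 2 ^ (m + 1) * 2) (hGc 0).aestronglyMeasurable ?_
    filter_upwards [h.abs_inner_le u hu, h.abs_inner_le w hw] with z hz hz'
    obtain ⟨h1, h2, h3, h4⟩ := hb 0 _ _ hz hz'
    simp only [G]
    rw [norm_mul, norm_pow]
    simp only [Real.norm_eq_abs]
    gcongr
  · filter_upwards [h.abs_inner_le u hu, h.abs_inner_le w hw] with z hz hz' α _
    obtain ⟨h1, h2, h3, h4⟩ := hb α _ _ hz hz'
    simp only [G']
    refine (norm_add_le _ _).trans ?_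
    simp only [norm_mul, norm_pow, Real.norm_eq_abs, Nat.abs_cast]
    gcongr
  · refine Eventually.of_forall fun z α _ => ?_
    have hc1 : HasDerivAt (fun α => cos α * ⟪u, z⟫ - sin α * ⟪w, z⟫)
        (-sin α * ⟪u, z⟫ - cos α * ⟪w, z⟫) α :=
      ((hasDerivAt_cos α).mul_const _).sub ((hasDerivAt_sin α).mul_const _)
    have hc2 : HasDerivAt (fun α => sin α * ⟪u, z⟫ + cos α * ⟪w, z⟫)
        (cos α * ⟪u, z⟫ + -sin α * ⟪w, z⟫) α :=
      ((hasDerivAt_sin α).mul_const _).add ((hasDerivAt_cos α).mul_const _)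
    exact (hc1.pow (m + 1)).mul hc2


lemma aux_ext_moments (μ₁ μ₂ : Measure ℝ) [IsFiniteMeasure μ₁] [IsFiniteMeasure μ₂]
    (h₁ : ∀ᵐ t ∂μ₁, t ∈ Set.Icc (-1 : ℝ) 1) (h₂ : ∀ᵐ t ∂μ₂, t ∈ Set.Icc (-1 : ℝ) 1)
    (h : ∀ k : ℕ, ∫ t, t ^ k ∂μ₁ = ∫ t, t ^ k ∂μ₂) : μ₁ = μ₂ := by
  have hint : ∀ (μ : Measure ℝ) [IsFiniteMeasure μ], (∀ᵐ t ∂μ, t ∈ Set.Icc (-1 : ℝ) 1) →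
      ∀ k : ℕ, Integrable (fun t : ℝ => t ^ k) μ := by
    intro μ _ hμ k
    refine Integrable.of_bound (C := 1) (by fun_prop) ?_
    filter_upwards [hμ] with t ht
    rw [norm_pow]; exact pow_le_one₀ (norm_nonneg _) (abs_le.mpr ht)
  have hintp : ∀ (μ : Measure ℝ) [IsFiniteMeasure μ], (∀ᵐ t ∂μ, t ∈ Set.Icc (-1 : ℝ) 1) →
      ∀ p : Polynomial ℝ, Integrable (fun t : ℝ => p.eval t) μ := by
    intro μ _ hμ p
    simp_rw [Polynomial.eval_eq_sum_range]
    exact integrable_finsetSum _ fun i _ => (hint μ hμ i).const_mul _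
  have hpoly : ∀ p : Polynomial ℝ, ∫ t, p.eval t ∂μ₁ = ∫ t, p.eval t ∂μ₂ := by
    intro p
    simp_rw [Polynomial.eval_eq_sum_range]
    rw [integral_finsetSum _ fun i _ => (hint μ₁ h₁ i).const_mul _,
      integral_finsetSum _ fun i _ => (hint μ₂ h₂ i).const_mul _]
    simp_rw [integral_const_mul, h]
  refine ext_of_forall_integral_eq_of_IsFiniteMeasure fun f => ?_
  have happ : ∀ (μ : Measure ℝ) [IsFiniteMeasure μ], (∀ᵐ t ∂μ, t ∈ Set.Icc (-1 : ℝ) 1) →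
      ∀ (p : Polynomial ℝ) (ε : ℝ), (∀ x ∈ Set.Icc (-1 : ℝ) 1, |p.eval x - f x| < ε) →
      |∫ t, p.eval t ∂μ - ∫ t, f t ∂μ| ≤ ε * μ.real Set.univ := by
    intro μ _ hμ p ε hp
    rw [← integral_sub (hintp μ hμ p) (f.integrable μ)]
    refine norm_integral_le_of_norm_le_const (f := fun t => p.eval t - f t) ?_
    filter_upwards [hμ] with t ht
    exact (hp t ht).le
  refine eq_of_abs_sub_le_all fun ε hε => ?_
  set K := μ₁.real Set.univ + μ₂.real Set.univ + 1 with hK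
  have hK0 : 0 < K := by positivity
  obtain ⟨p, hp⟩ := exists_polynomial_near_of_continuousOn (-1) 1 f f.continuous.continuousOn
    (ε / K) (by positivity)
  have e1 := happ μ₁ h₁ p _ hp
  have e2 := happ μ₂ h₂ p _ hp
  rw [hpoly p] at e1
  have e3 : ε / K * K = ε := by field_simp
  have e4 : 0 < ε / K := by positivity
  rw [abs_le] at *
  constructor <;> nlinarith

lemma AuxSph.moment_rec {n : ℕ} {ν : Measure (EuclideanSpace ℝ (Fin n))} (h : AuxSph ν)
    (u : EuclideanSpace ℝ (Fin n)) (hu : ‖u‖ = 1) (hn : 0 < n) (m : ℕ) :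
    ((m : ℝ) + 1) * (∫ z, ⟪u, z⟫ ^ m ∂ν - ∫ z, ⟪u, z⟫ ^ (m + 2) ∂ν)
      = ((n : ℝ) - 1) * ∫ z, ⟪u, z⟫ ^ (m + 2) ∂ν := by
  have := h.prob
  let i0 : Fin n := ⟨0, hn⟩
  obtain ⟨b, hb⟩ := Orthonormal.exists_orthonormalBasis_extension_of_card_eq (𝕜 := ℝ)
    (E := EuclideanSpace ℝ (Fin n)) (ι := Fin n) (by simp) (v := fun _ => u) (s := {i0}) (by
      rw [orthonormal_iff_ite]
      rintro ⟨i, rfl⟩ ⟨j, rfl⟩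
      simp [hu])
  have hb0 : b i0 = u := hb i0 rfl
  have hi : ∀ j, Integrable (fun z => ⟪u, z⟫ ^ m * ⟪b j, z⟫ ^ 2) ν := by
    intro j
    refine Integrable.of_bound (C := 1) (by fun_prop) ?_
    filter_upwards [h.abs_inner_le u hu, h.abs_inner_le (b j) (b.orthonormal.1 j)] with z hz hz'
    rw [norm_mul, norm_pow, norm_pow]
    exact mul_le_one₀ (pow_le_one₀ (norm_nonneg _) hz) (by positivity)
      (pow_le_one₀ (norm_nonneg _) hz')
  have h1 : ∫ z, ⟪u, z⟫ ^ m ∂ν = ∑ j, ∫ z, ⟪u, z⟫ ^ m * ⟪b j, z⟫ ^ 2 ∂ν := by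
    rw [← integral_finsetSum _ fun j _ => hi j]
    refine integral_congr_ae ?_
    filter_upwards [h.norm] with z hz
    rw [← Finset.mul_sum, b.sum_sq_inner_right, hz]; ring
  rw [← Finset.add_sum_erase _ _ (Finset.mem_univ i0)] at h1
  have h2 : ∀ j ∈ Finset.univ.erase i0, ∫ z, ⟪u, z⟫ ^ m * ⟪b j, z⟫ ^ 2 ∂ν
      = ((m : ℝ) + 1)⁻¹ * ∫ z, ⟪u, z⟫ ^ (m + 2) ∂ν := by
    intro j hj
    rw [← h.moment_rot u (b j) hu (b.orthonormal.1 j) ?_ m]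
    · field_simp
    · rw [← hb0]; exact b.orthonormal.2 (Finset.ne_of_mem_erase hj).symm
  rw [Finset.sum_congr rfl h2, Finset.sum_const, Finset.card_erase_of_mem (Finset.mem_univ _),
    hb0] at h1
  simp_rw [← pow_add] at h1
  rw [h1, Finset.card_univ, Fintype.card_fin, nsmul_eq_mul, Nat.cast_sub hn]
  push_cast
  field_simp
  ring

lemma AuxSph.moment_one {n : ℕ} {ν : Measure (EuclideanSpace ℝ (Fin n))} (h : AuxSph ν)
    (u : EuclideanSpace ℝ (Fin n)) : ∫ z, ⟪u, z⟫ ^ 1 ∂ν = 0 := by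
  have h1 := h.integral_comp (LinearIsometryEquiv.neg ℝ) (fun z => ⟪u, z⟫ ^ 1)
  simp only [LinearIsometryEquiv.coe_neg, inner_neg_right, pow_one, integral_neg] at h1 ⊢
  linarith

/-- The Gegenbauer weight. -/
def auxWt (n : ℕ) (t : ℝ) : ℝ := (1 - t ^ 2) ^ (((n : ℝ) - 3) / 2)

lemma auxWt_pos (n : ℕ) {t : ℝ} (ht : t ∈ Set.Ioo (-1 : ℝ) 1) : 0 < auxWt n t :=
  Real.rpow_pos_of_pos (by nlinarith [ht.1, ht.2]) _

lemma auxWt_meas (n : ℕ) : Measurable (auxWt n) := by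
  unfold auxWt; fun_prop

lemma auxWt_int (n : ℕ) (hn : 2 ≤ n) : IntegrableOn (auxWt n) (Set.Ioo (-1 : ℝ) 1) := by
  have h1 : IntegrableOn (fun x : ℝ => 1 / √(1 - x ^ 2)) (Set.Ioc (-1 : ℝ) 1) :=
    intervalIntegral.integrableOn_deriv_of_nonneg (g := arcsin)
      Real.continuous_arcsin.continuousOn
      (fun x hx => Real.hasDerivAt_arcsin hx.1.ne' hx.2.ne) (fun x hx => by positivity)
  refine Integrable.mono' (h1.mono_set Set.Ioo_subset_Ioc_self)
    (auxWt_meas n).aestronglyMeasurable ?_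
  refine (ae_restrict_iff' measurableSet_Ioo).mpr (Eventually.of_forall fun t ht => ?_)
  rw [Real.norm_of_nonneg (auxWt_pos n ht).le]
  have h0 : 0 < 1 - t ^ 2 := by nlinarith [ht.1, ht.2]
  rw [Real.sqrt_eq_rpow, one_div, ← Real.rpow_neg h0.le]
  refine Real.rpow_le_rpow_of_exponent_ge h0 (by nlinarith) ?_
  have : (2 : ℝ) ≤ n := by exact_mod_cast hn
  linarith

lemma auxWt_int_pow (n : ℕ) (hn : 2 ≤ n) (k : ℕ) :
    IntegrableOn (fun t => t ^ k * auxWt n t) (Set.Ioo (-1 : ℝ) 1) := by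
  refine Integrable.mono' (auxWt_int n hn)
    ((measurable_id.pow_const k).mul (auxWt_meas n)).aestronglyMeasurable ?_
  refine (ae_restrict_iff' measurableSet_Ioo).mpr (Eventually.of_forall fun t ht => ?_)
  rw [norm_mul, Real.norm_of_nonneg (auxWt_pos n ht).le, norm_pow]
  refine mul_le_of_le_one_left (auxWt_pos n ht).le (pow_le_one₀ (norm_nonneg _) ?_)
  exact abs_le.mpr ⟨ht.1.le, ht.2.le⟩

lemma aux_interval (f : ℝ → ℝ) : ∫ t in (-1 : ℝ)..1, f t = ∫ t in Set.Ioo (-1 : ℝ) 1, f t := by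
  rw [intervalIntegral.integral_of_le (by norm_num), integral_Ioc_eq_integral_Ioo]

lemma auxWt_total_pos (n : ℕ) (hn : 2 ≤ n) : 0 < ∫ t in Set.Ioo (-1 : ℝ) 1, auxWt n t := by
  rw [setIntegral_pos_iff_support_of_nonneg_ae]
  · have : Function.support (auxWt n) ∩ Set.Ioo (-1 : ℝ) 1 = Set.Ioo (-1 : ℝ) 1 :=
      Set.inter_eq_right.mpr fun t ht => (auxWt_pos n ht).ne'
    rw [this]; simp
  · exact (ae_restrict_iff' measurableSet_Ioo).mpr
      (Eventually.of_forall fun t ht => (auxWt_pos n ht).le)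
  · exact auxWt_int n hn

lemma auxWt_rec (n : ℕ) (hn : 2 ≤ n) (m : ℕ) :
    ((m : ℝ) + 1) * ((∫ t in Set.Ioo (-1 : ℝ) 1, t ^ m * auxWt n t) -
      ∫ t in Set.Ioo (-1 : ℝ) 1, t ^ (m + 2) * auxWt n t)
      = ((n : ℝ) - 1) * ∫ t in Set.Ioo (-1 : ℝ) 1, t ^ (m + 2) * auxWt n t := by
  have hn' : (2 : ℝ) ≤ n := by exact_mod_cast hn
  have hft := intervalIntegral.integral_eq_sub_of_hasDerivAt_of_le (a := -1) (b := 1)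
    (f := fun t : ℝ => t ^ (m + 1) * (1 - t ^ 2) ^ (((n : ℝ) - 1) / 2))
    (f' := fun t => ((m : ℝ) + 1) * (t ^ m * auxWt n t - t ^ (m + 2) * auxWt n t)
      - ((n : ℝ) - 1) * (t ^ (m + 2) * auxWt n t)) (by norm_num) ?_ ?_ ?_
  · have e : (1 - (1 : ℝ) ^ 2) ^ (((n : ℝ) - 1) / 2) = 0 := by
      norm_num; rw [Real.zero_rpow]; linarith
    have e' : (1 - (-1 : ℝ) ^ 2) ^ (((n : ℝ) - 1) / 2) = 0 := by
      norm_num; rw [Real.zero_rpow]; linarith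
    rw [e, e', aux_interval, integral_sub, integral_const_mul, integral_const_mul,
      integral_sub (auxWt_int_pow n hn m) (auxWt_int_pow n hn (m + 2))] at hft
    · linarith
    · exact ((auxWt_int_pow n hn m).sub (auxWt_int_pow n hn (m + 2))).const_mul _
    · exact (auxWt_int_pow n hn (m + 2)).const_mul _
  · refine ContinuousOn.mul (by fun_prop) (ContinuousOn.rpow_const (by fun_prop) ?_)
    intro x _; right; linarith
  · intro t ht
    have h0 : 0 < 1 - t ^ 2 := by nlinarith [ht.1, ht.2]
    have d1 : HasDerivAt (fun t : ℝ => 1 - t ^ 2) (-(2 * t)) t := by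
      simpa using (hasDerivAt_pow 2 t).const_sub 1
    have d2 := d1.rpow_const (p := ((n : ℝ) - 1) / 2) (Or.inl h0.ne')
    have d3 := (hasDerivAt_pow (m + 1) t).mul d2
    refine d3.congr_deriv ?_
    have e1 : ((n : ℝ) - 1) / 2 - 1 = ((n : ℝ) - 3) / 2 := by ring
    have e2 : (1 - t ^ 2) ^ (((n : ℝ) - 1) / 2) = (1 - t ^ 2) * auxWt n t := by
      unfold auxWt
      rw [← Real.rpow_one_add' h0.le (by linarith)]
      congr 1; ring
    rw [e1, e2]
    change _ + _ * (_ * _ * auxWt n t) = _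
    push_cast
    ring
  · rw [intervalIntegrable_iff_integrableOn_Ioo_of_le (by norm_num)]
    exact (((auxWt_int_pow n hn m).sub (auxWt_int_pow n hn (m + 2))).const_mul _).sub
      ((auxWt_int_pow n hn (m + 2)).const_mul _)

lemma auxWt_one (n : ℕ) : ∫ t in Set.Ioo (-1 : ℝ) 1, t ^ 1 * auxWt n t = 0 := by
  rw [← aux_interval]
  have h := intervalIntegral.integral_comp_neg (a := -1) (b := 1) (fun t => t ^ 1 * auxWt n t)
  simp only [auxWt, neg_neg, pow_one, even_two, Even.neg_pow, neg_mul,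
    intervalIntegral.integral_neg] at h ⊢
  linarith

/-- The (unnormalised) Gegenbauer measure. -/
def auxMeas (n : ℕ) : Measure ℝ :=
  (volume.restrict (Set.Ioo (-1 : ℝ) 1)).withDensity fun t => ENNReal.ofReal (auxWt n t)

lemma auxMeas_integral (n : ℕ) (f : ℝ → ℝ) :
    ∫ t, f t ∂(auxMeas n) = ∫ t in Set.Ioo (-1 : ℝ) 1, f t * auxWt n t := by
  unfold auxMeas
  rw [integral_withDensity_eq_integral_toReal_smul (auxWt_meas n).ennreal_ofReal
    (Eventually.of_forall fun _ => ENNReal.ofReal_lt_top)]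
  refine setIntegral_congr_fun measurableSet_Ioo fun t ht => ?_
  simp only [smul_eq_mul]
  rw [ENNReal.toReal_ofReal (auxWt_pos n ht).le, mul_comm]

lemma auxMeas_ac (n : ℕ) : auxMeas n ≪ volume.restrict (Set.Ioo (-1 : ℝ) 1) :=
  withDensity_absolutelyContinuous _ _

lemma auxMeas_finite (n : ℕ) (hn : 2 ≤ n) : IsFiniteMeasure (auxMeas n) :=
  isFiniteMeasure_withDensity_ofReal (auxWt_int n hn).2

/-- Law of a coordinate on the sphere. -/
lemma AuxSph.law {n : ℕ} {ν : Measure (EuclideanSpace ℝ (Fin n))} (h : AuxSph ν) (hn : 2 ≤ n)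
    (u : EuclideanSpace ℝ (Fin n)) (hu : ‖u‖ = 1) :
    ν.map (fun z => ⟪u, z⟫)
      = ENNReal.ofReal ((∫ t in Set.Ioo (-1 : ℝ) 1, auxWt n t)⁻¹) • auxMeas n := by
  have := h.prob
  have := auxMeas_finite n hn
  have hI := auxWt_total_pos n hn
  have hmeas : Measurable (fun z : EuclideanSpace ℝ (Fin n) => ⟪u, z⟫) := by fun_prop
  have hn' : (2 : ℝ) ≤ n := by exact_mod_cast hn
  have : IsFiniteMeasure
      (ENNReal.ofReal ((∫ t in Set.Ioo (-1 : ℝ) 1, auxWt n t)⁻¹) • auxMeas n) :=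
    Measure.smul_finite _ ENNReal.ofReal_ne_top
  have : IsProbabilityMeasure (ν.map (fun z => ⟪u, z⟫)) :=
    Measure.isProbabilityMeasure_map hmeas.aemeasurable
  refine aux_ext_moments _ _ ?_ ?_ ?_
  · refine (ae_map_iff hmeas.aemeasurable measurableSet_Icc).mpr ?_
    filter_upwards [h.abs_inner_le u hu] with z hz
    exact abs_le.mp hz
  · refine Measure.ae_smul_measure ?_ _
    refine (auxMeas_ac n).ae_le ?_
    exact (ae_restrict_iff' measurableSet_Ioo).mpr
      (Eventually.of_forall fun t ht => Set.Ioo_subset_Icc_self ht)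
  · intro k
    rw [integral_map hmeas.aemeasurable (by fun_prop), integral_smul_measure, auxMeas_integral,
      ENNReal.toReal_ofReal (by positivity), smul_eq_mul]
    induction k using Nat.twoStepInduction with
    | zero => simp [hI.ne']
    | one => rw [h.moment_one, auxWt_one, mul_zero]
    | more k ih _ =>
      have r1 := h.moment_rec u hu (by omega) k
      have r2 := auxWt_rec n hn k
      rw [ih] at r1
      have h3 : ((k : ℝ) + 1 + (n - 1)) ≠ 0 := by
        have : (0 : ℝ) ≤ k := by positivity
        linarith
      refine mul_left_cancel₀ h3 ?_
      linear_combination (-1 : ℝ) * r1 + (∫ t in Set.Ioo (-1 : ℝ) 1, auxWt n t)⁻¹ * r2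


lemma AuxSph.ae_inner {n : ℕ} {ν : Measure (EuclideanSpace ℝ (Fin n))} (h : AuxSph ν)
    (hn : 2 ≤ n) (u : EuclideanSpace ℝ (Fin n)) (hu : ‖u‖ = 1) (c : ℝ) :
    ∀ᵐ z ∂ν, ⟪u, z⟫ ≠ c := by
  have hmeas : Measurable (fun z : EuclideanSpace ℝ (Fin n) => ⟪u, z⟫) := by fun_prop
  have h1 : ∀ᵐ t ∂(ν.map (fun z => ⟪u, z⟫)), t ≠ c := by
    rw [h.law hn u hu]
    refine Measure.ae_smul_measure ?_ _
    refine (auxMeas_ac n).ae_le (ae_restrict_of_ae ?_)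
    exact Measure.ae_ne volume c
  exact ae_of_ae_map hmeas.aemeasurable h1

lemma AuxSph.zonal {n : ℕ} {ν : Measure (EuclideanSpace ℝ (Fin n))} (h : AuxSph ν)
    (hn : 2 ≤ n) (u : EuclideanSpace ℝ (Fin n)) (hu : ‖u‖ = 1) (f : ℝ → ℝ)
    (hf : AEStronglyMeasurable f (volume.restrict (Set.Ioo (-1 : ℝ) 1))) :
    AEStronglyMeasurable (fun z => f ⟪u, z⟫) ν ∧
    ∫ z, f ⟪u, z⟫ ∂ν = (∫ t in Set.Ioo (-1 : ℝ) 1, f t * auxWt n t) /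
      ∫ t in Set.Ioo (-1 : ℝ) 1, auxWt n t := by
  have hmeas : Measurable (fun z : EuclideanSpace ℝ (Fin n) => ⟪u, z⟫) := by fun_prop
  have hI := auxWt_total_pos n hn
  have hf' : AEStronglyMeasurable f (ν.map (fun z => ⟪u, z⟫)) := by
    rw [h.law hn u hu]
    exact (hf.mono_ac (auxMeas_ac n)).smul_measure _
  refine ⟨hf'.comp_aemeasurable hmeas.aemeasurable, ?_⟩
  rw [← integral_map hmeas.aemeasurable hf', h.law hn u hu, integral_smul_measure,
    auxMeas_integral, ENNReal.toReal_ofReal (by positivity), smul_eq_mul]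
  ring

lemma aux_exists_sph (n : ℕ) (hn : 0 < n) :
    ∃ ν : Measure (EuclideanSpace ℝ (Fin n)), AuxSph ν := by
  have : Nonempty (Fin n) := ⟨⟨0, hn⟩⟩
  let E := EuclideanSpace ℝ (Fin n)
  let B : Set E := Metric.ball 0 1
  let P : Measure E := ProbabilityTheory.cond volume B
  have hP : IsProbabilityMeasure P :=
    ProbabilityTheory.cond_isProbabilityMeasure_of_finite
      (Metric.measure_ball_pos _ _ one_pos).ne' measure_ball_lt_top.ne
  have hm : Measurable (fun v : E => ‖v‖⁻¹ • v) := by fun_prop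
  refine ⟨P.map (fun v => ‖v‖⁻¹ • v), ⟨Measure.isProbabilityMeasure_map hm.aemeasurable, ?_, ?_⟩⟩
  · rw [ae_map_iff hm.aemeasurable (measurableSet_eq_fun (by fun_prop) (by fun_prop))]
    have h0 : ∀ᵐ v ∂P, v ≠ 0 :=
      (ProbabilityTheory.cond_absolutelyContinuous).ae_le (Measure.ae_ne volume 0)
    filter_upwards [h0] with v hv
    rw [norm_smul, norm_inv, norm_norm, inv_mul_cancel₀ (norm_ne_zero_iff.mpr hv)]
  · intro A
    have hA : Measurable A := A.continuous.measurable
    have hPA : P.map A = P := by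
      have h1 : MeasurePreserving A (volume.restrict (A ⁻¹' B)) (volume.restrict B) :=
        A.measurePreserving.restrict_preimage measurableSet_ball
      have h2 : A ⁻¹' B = B := by
        ext v; simp [B]
      rw [h2] at h1
      change Measure.map A ((volume B)⁻¹ • volume.restrict B) = (volume B)⁻¹ • volume.restrict B
      rw [Measure.map_smul, h1.map_eq]
    rw [Measure.map_map hA hm]
    conv_rhs => rw [← hPA]
    rw [Measure.map_map hm hA]
    congr 1
    ext1 v
    have hv : ‖A v‖ = ‖v‖ := A.norm_map v
    simp [hv]

lemma aux_sph_of_inv {n : ℕ} (σ : Measure (Metric.sphere (0 : EuclideanSpace ℝ (Fin n)) 1))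
    (hσ : IsInvProbSphere n σ) : AuxSph (σ.map Subtype.val) := by
  have := hσ.1
  have hm : Measurable (Subtype.val : Metric.sphere (0 : EuclideanSpace ℝ (Fin n)) 1 → _) :=
    measurable_subtype_coe
  refine ⟨Measure.isProbabilityMeasure_map hm.aemeasurable, ?_, ?_⟩
  · rw [ae_map_iff hm.aemeasurable (measurableSet_eq_fun (by fun_prop) (by fun_prop))]
    exact Eventually.of_forall fun z => by simp
  · intro A
    have hA : Measurable A := A.continuous.measurable
    rw [Measure.map_map hA hm]
    conv_rhs => rw [← hσ.2 A]
    rw [Measure.map_map hm]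
    · rfl
    · exact (hA.comp hm).subtype_mk

lemma aux_exists_pair {N : ℕ} (hN : 2 ≤ N) (t : ℝ) (ht : |t| ≤ 1) :
    ∃ u v : EuclideanSpace ℝ (Fin N), ‖u‖ = 1 ∧ ‖v‖ = 1 ∧ ⟪u, v⟫ = t := by
  let b := EuclideanSpace.basisFun (Fin N) ℝ
  let i : Fin N := ⟨0, by omega⟩
  let j : Fin N := ⟨1, by omega⟩
  have hij : i ≠ j := by simp [i, j]
  have h1 : ⟪b i, b i⟫ = 1 := by rw [real_inner_self_eq_norm_sq, b.orthonormal.1 i]; norm_num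
  have h2 : ⟪b j, b j⟫ = 1 := by rw [real_inner_self_eq_norm_sq, b.orthonormal.1 j]; norm_num
  have h3 : ⟪b i, b j⟫ = 0 := b.orthonormal.2 hij
  have h4 : ⟪b j, b i⟫ = 0 := b.orthonormal.2 hij.symm
  have ht2 : 0 ≤ 1 - t ^ 2 := by rw [sub_nonneg, sq_le_one_iff_abs_le_one]; exact ht
  refine ⟨b i, t • b i + √(1 - t ^ 2) • b j, b.orthonormal.1 i, ?_, ?_⟩
  · rw [← pow_eq_one_iff_of_nonneg (norm_nonneg _) two_ne_zero, ← real_inner_self_eq_norm_sq]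
    simp only [inner_add_left, inner_add_right, inner_smul_left, inner_smul_right, h1, h2, h3, h4,
      conj_trivial]
    have := Real.mul_self_sqrt ht2
    linear_combination this
  · simp [inner_add_right, inner_smul_right, h3]

lemma aux_psd_bound {N : ℕ} (hN : 2 ≤ N) (g : ℝ → ℝ) (hg : PosSemidefOnSphere N g) (t : ℝ)
    (ht : |t| ≤ 1) : |g t| ≤ g 1 := by
  obtain ⟨u, v, hu, hv, huv⟩ := aux_exists_pair hN t ht
  have huu : ⟪u, u⟫ = 1 := by rw [real_inner_self_eq_norm_sq, hu]; norm_num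
  have hvv : ⟪v, v⟫ = 1 := by rw [real_inner_self_eq_norm_sq, hv]; norm_num
  have hvu : ⟪v, u⟫ = t := by rw [real_inner_comm]; exact huv
  have hw : ∀ i, ‖(![u, v] : Fin 2 → _) i‖ = 1 := by
    intro i; fin_cases i <;> simp [hu, hv]
  have h1 := hg 2 ![u, v] ![1, 1] hw
  have h2 := hg 2 ![u, v] ![1, -1] hw
  simp only [Fin.sum_univ_two, Matrix.cons_val_zero, Matrix.cons_val_one, huu, hvv, huv,
    hvu] at h1 h2
  rw [abs_le]; constructor <;> linarith

lemma aux_psd_mean {N : ℕ} (hN : 2 ≤ N) (g : ℝ → ℝ) (hg : PosSemidefOnSphere N g)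
    (hgm : AEStronglyMeasurable g (volume.restrict (Set.Ioo (-1 : ℝ) 1))) (g0 : ℝ)
    (hg0 : g0 = (∫ t in Set.Ioo (-1 : ℝ) 1, g t * auxWt N t) /
      ∫ t in Set.Ioo (-1 : ℝ) 1, auxWt N t) (hpos : 0 ≤ g0) :
    g0 ≤ g 1 ∧ ∀ (M : ℕ) (w : Fin M → EuclideanSpace ℝ (Fin N)) (c : Fin M → ℝ),
      (∀ i, ‖w i‖ = 1) → g0 * (∑ i, c i) ^ 2 ≤ ∑ i, ∑ j, c i * c j * g ⟪w i, w j⟫ := by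
  obtain ⟨ν, hν⟩ := aux_exists_sph N (by omega)
  have := hν.prob
  have hint : ∀ u : EuclideanSpace ℝ (Fin N), ‖u‖ = 1 → Integrable (fun z => g ⟪u, z⟫) ν := by
    intro u hu
    refine Integrable.of_bound (C := g 1) (hν.zonal hN u hu g hgm).1 ?_
    filter_upwards [hν.abs_inner_le u hu] with z hz
    exact aux_psd_bound hN g hg _ hz
  have hval : ∀ u : EuclideanSpace ℝ (Fin N), ‖u‖ = 1 → ∫ z, g ⟪u, z⟫ ∂ν = g0 := by
    intro u hu
    rw [(hν.zonal hN u hu g hgm).2, hg0]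
  have hle : g0 ≤ g 1 := by
    obtain ⟨u, -, hu, -, -⟩ := aux_exists_pair hN 0 (by simp)
    rw [← hval u hu]
    have : ∫ z, g ⟪u, z⟫ ∂ν ≤ ∫ _, g 1 ∂ν := by
      refine integral_mono_ae (hint u hu) (integrable_const _) ?_
      filter_upwards [hν.abs_inner_le u hu] with z hz
      exact (abs_le.mp (aux_psd_bound hN g hg _ hz)).2
    simpa using this
  refine ⟨hle, ?_⟩
  let P : ℝ → Prop := fun l =>
    ∀ (M : ℕ) (w : Fin M → EuclideanSpace ℝ (Fin N)) (c : Fin M → ℝ),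
      (∀ i, ‖w i‖ = 1) → l * (∑ i, c i) ^ 2 ≤ ∑ i, ∑ j, c i * c j * g ⟪w i, w j⟫
  have hmono : ∀ l l', l ≤ l' → P l' → P l := fun l l' hl h M w c hw =>
    (mul_le_mul_of_nonneg_right hl (sq_nonneg _)).trans (h M w c hw)
  have hstep : ∀ l, l < g0 → P l → P (l + (g0 - l) ^ 2 / (g 1 - l)) := by
    intro l hl hP M w c hw
    set C := ∑ i, c i with hC
    set Q := ∑ i, ∑ j, c i * c j * g ⟪w i, w j⟫ with hQ
    have key : ∀ d : ℝ, l * (C - d) ^ 2 ≤ d ^ 2 * g 1 - 2 * d * C * g0 + Q := by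
      intro d
      have hpt : ∀ u : EuclideanSpace ℝ (Fin N), ‖u‖ = 1 →
          l * (C - d) ^ 2 ≤ d ^ 2 * g 1 - 2 * d * ∑ i, c i * g ⟪w i, u⟫ + Q := by
        intro u hu
        have huu : ⟪u, u⟫ = 1 := by rw [real_inner_self_eq_norm_sq, hu]; norm_num
        have h1 := hP (M + 1) (Fin.cons u w) (Fin.cons (-d) c) (by
          intro i; refine Fin.cases ?_ ?_ i
          · simpa using hu
          · intro i; simpa using hw i)
        simp only [Fin.sum_univ_succ, Fin.cons_zero, Fin.cons_succ, huu,
          Finset.sum_add_distrib] at h1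
        have e1 : ∑ i, -d * c i * g ⟪u, w i⟫ = -d * ∑ i, c i * g ⟪w i, u⟫ := by
          rw [Finset.mul_sum]
          refine Finset.sum_congr rfl fun i _ => ?_
          rw [real_inner_comm]; ring
        have e2 : ∑ i, c i * -d * g ⟪w i, u⟫ = -d * ∑ i, c i * g ⟪w i, u⟫ := by
          rw [Finset.mul_sum]
          refine Finset.sum_congr rfl fun i _ => ?_
          ring
        rw [e1, e2, ← hC, ← hQ] at h1
        calc l * (C - d) ^ 2 = l * (-d + C) ^ 2 := by ring
          _ ≤ _ := h1
          _ = _ := by ring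
      have hs : Integrable (fun u => ∑ i, c i * g ⟪w i, u⟫) ν :=
        integrable_finsetSum _ fun i _ => (hint (w i) (hw i)).const_mul _
      have hi2 : Integrable (fun u => d ^ 2 * g 1 - 2 * d * ∑ i, c i * g ⟪w i, u⟫) ν :=
        (integrable_const _).sub (hs.const_mul _)
      have h2 : ∫ _, l * (C - d) ^ 2 ∂ν ≤
          ∫ u, (d ^ 2 * g 1 - 2 * d * ∑ i, c i * g ⟪w i, u⟫ + Q) ∂ν := by
        refine integral_mono_ae (integrable_const _) (hi2.add (integrable_const _)) ?_
        filter_upwards [hν.norm] with u hu using hpt u hu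
      rw [integral_add hi2 (integrable_const _),
        integral_sub (integrable_const _) (hs.const_mul _), integral_const_mul (2 * d),
        integral_finsetSum _ fun i _ => (hint (w i) (hw i)).const_mul _] at h2
      simp_rw [integral_const_mul] at h2
      have h3 : ∑ i, c i * ∫ u, g ⟪w i, u⟫ ∂ν = C * g0 := by
        rw [hC, Finset.sum_mul]
        exact Finset.sum_congr rfl fun i _ => by rw [hval _ (hw i)]
      rw [h3] at h2
      simp only [integral_const, probReal_univ, smul_eq_mul, one_mul] at h2
      linarith
    have hgl : 0 < g 1 - l := by linarith
    have h4 := key (C * (g0 - l) / (g 1 - l))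
    have h5 : (l + (g0 - l) ^ 2 / (g 1 - l)) * C ^ 2 = l * (C - C * (g0 - l) / (g 1 - l)) ^ 2 -
        ((C * (g0 - l) / (g 1 - l)) ^ 2 * g 1 - 2 * (C * (g0 - l) / (g 1 - l)) * C * g0) := by
      field_simp; ring
    linarith
  let S : Set ℝ := {l | l ≤ g0 ∧ P l}
  have h0S : (0 : ℝ) ∈ S := ⟨hpos, fun M w c hw => by simpa using hg M w c hw⟩
  have hbdd : BddAbove S := ⟨g0, fun l hl => hl.1⟩
  have hclosed : IsClosed S := by
    have : S = Set.Iic g0 ∩ ⋂ (M : ℕ) (w : Fin M → EuclideanSpace ℝ (Fin N)) (c : Fin M → ℝ)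
        (_ : ∀ i, ‖w i‖ = 1),
        {l | l * (∑ i, c i) ^ 2 ≤ ∑ i, ∑ j, c i * c j * g ⟪w i, w j⟫} := by
      ext l; simp [S, P]
    rw [this]
    refine isClosed_Iic.inter ?_
    refine isClosed_iInter fun M => isClosed_iInter fun w => isClosed_iInter fun c =>
      isClosed_iInter fun _ => isClosed_le (by fun_prop) (by fun_prop)
  have hmem : sSup S ∈ S := hclosed.csSup_mem ⟨0, h0S⟩ hbdd
  rcases hmem.1.lt_or_eq with hlt | heq
  · exfalso
    have h1 := hstep _ hlt hmem.2
    have h2 : sSup S < min (sSup S + (g0 - sSup S) ^ 2 / (g 1 - sSup S)) g0 := by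
      refine lt_min ?_ hlt
      have : 0 < (g0 - sSup S) ^ 2 / (g 1 - sSup S) :=
        div_pos (pow_pos (by linarith) 2) (by linarith)
      linarith
    exact absurd (le_csSup hbdd (⟨min_le_right _ _, hmono _ _ (min_le_left _ _) h1⟩ :
      min (sSup S + (g0 - sSup S) ^ 2 / (g 1 - sSup S)) g0 ∈ S)) (not_le.mpr h2)
  · rw [← heq]; exact hmem.2


lemma aux_norm_proj {n : ℕ} (z x : EuclideanSpace ℝ (Fin n)) (hz : ‖z‖ = 1) (hx : ‖x‖ = 1) :
    ‖x - ⟪x, z⟫ • z‖ = √(1 - ⟪x, z⟫ ^ 2) := by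
  have hzz : ⟪z, z⟫ = 1 := by rw [real_inner_self_eq_norm_sq, hz]; norm_num
  have hxx : ⟪x, x⟫ = 1 := by rw [real_inner_self_eq_norm_sq, hx]; norm_num
  rw [norm_eq_sqrt_real_inner]
  congr 1
  simp only [inner_sub_left, inner_sub_right, inner_smul_left, inner_smul_right, hzz, hxx,
    real_inner_comm x z, conj_trivial]
  ring

lemma aux_inner_proj {n : ℕ} (z x y : EuclideanSpace ℝ (Fin n)) (hz : ‖z‖ = 1) (hx : ‖x‖ = 1)
    (hy : ‖y‖ = 1) : ⟪projZ z x, projZ z y⟫ =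
      (√(1 - ⟪x, z⟫ ^ 2))⁻¹ * (√(1 - ⟪y, z⟫ ^ 2))⁻¹ * (⟪x, y⟫ - ⟪x, z⟫ * ⟪y, z⟫) := by
  have hzz : ⟪z, z⟫ = 1 := by rw [real_inner_self_eq_norm_sq, hz]; norm_num
  unfold projZ
  rw [aux_norm_proj z x hz hx, aux_norm_proj z y hz hy]
  simp only [inner_sub_left, inner_sub_right, inner_smul_left, inner_smul_right, hzz,
    real_inner_comm y z, conj_trivial]
  ring

lemma aux_norm_projZ {n : ℕ} (z x : EuclideanSpace ℝ (Fin n)) (hz : ‖z‖ = 1) (hx : ‖x‖ = 1)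
    (h1 : ⟪x, z⟫ ≠ 1) (h2 : ⟪x, z⟫ ≠ -1) : ‖projZ z x‖ = 1 := by
  have h3 : |⟪x, z⟫| ≤ 1 := by
    have := abs_real_inner_le_norm x z
    rwa [hx, hz, one_mul] at this
  rw [abs_le] at h3
  have h4 := lt_of_le_of_ne h3.2 h1
  have h5 := lt_of_le_of_ne h3.1 h2.symm
  have h6 : 0 < 1 - ⟪x, z⟫ ^ 2 := by nlinarith
  unfold projZ
  rw [norm_smul, norm_inv, norm_norm, aux_norm_proj z x hz hx]
  exact inv_mul_cancel₀ (Real.sqrt_pos.mpr h6).ne'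

lemma aux_proj_orth {n : ℕ} (z x : EuclideanSpace ℝ (Fin n)) (hz : ‖z‖ = 1) :
    ⟪z, projZ z x⟫ = 0 := by
  have hzz : ⟪z, z⟫ = 1 := by rw [real_inner_self_eq_norm_sq, hz]; norm_num
  unfold projZ
  rw [inner_smul_right, inner_sub_right, inner_smul_right, hzz, real_inner_comm]
  ring

/-- one-dimensional null set lemma for `b ↦ (t - ab)/√((1-a²)(1-b²))`. -/
lemma aux_null_b (a t : ℝ) (ha0 : a ≠ 0) (ha : |a| < 1) (B : Set ℝ) (hB : volume B = 0) :
    volume {b : ℝ | |b| < 1 ∧ (√(1 - a ^ 2))⁻¹ * (√(1 - b ^ 2))⁻¹ * (t - a * b) ∈ B} = 0 := by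
  have h1 : volume {b : ℝ | b * t = a} = 0 := by
    rcases eq_or_ne t 0 with rfl | ht
    · have : {b : ℝ | b * 0 = a} = ∅ := by
        ext b; simpa using ha0.symm
      rw [this]; simp
    · have : {b : ℝ | b * t = a} = {a / t} := by
        ext b; simp only [Set.mem_ofPred_eq, Set.mem_singleton_iff]; rw [eq_div_iff ht]
      rw [this]; simp
  refine measure_mono_null ?_ (measure_union_null
    (aux_null_preimage (fun b => (√(1 - a ^ 2))⁻¹ * (√(1 - b ^ 2))⁻¹ * (t - a * b)) B hB) h1)
  rintro b ⟨hb, hbB⟩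
  by_cases hbt : b * t = a
  · exact Or.inr hbt
  left
  refine ⟨hbB, ?_⟩
  have ha2 : 0 < 1 - a ^ 2 := by rw [sub_pos, sq_lt_one_iff_abs_lt_one]; exact ha
  have hb2 : 0 < 1 - b ^ 2 := by rw [sub_pos, sq_lt_one_iff_abs_lt_one]; exact hb
  have ra := Real.sqrt_pos.mpr ha2
  have rb := Real.sqrt_pos.mpr hb2
  have rb2 := Real.sq_sqrt hb2.le
  have d1 : HasDerivAt (fun b : ℝ => 1 - b ^ 2) (-(2 * b)) b := by
    simpa using (hasDerivAt_pow 2 b).const_sub 1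
  have d2 := ((d1.sqrt hb2.ne').inv rb.ne').const_mul ((√(1 - a ^ 2))⁻¹)
  have d3 : HasDerivAt (fun b : ℝ => t - a * b) (-a) b := by
    simpa using ((hasDerivAt_id b).const_mul a).const_sub t
  refine ⟨(√(1 - a ^ 2))⁻¹ * (b * t - a) / (√(1 - b ^ 2)) ^ 3, ?_, ?_⟩
  · have : b * t - a ≠ 0 := sub_ne_zero.mpr hbt
    positivity
  · refine (d2.mul d3).congr_deriv ?_
    simp only [Pi.inv_apply]
    set r := √(1 - b ^ 2)
    set k := √(1 - a ^ 2)
    have : b ^ 2 = 1 - r ^ 2 := by linarith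
    field_simp
    linear_combination (-a) * this

lemma aux_null_alpha (p q c s : ℝ) (hp : p ≠ 0) (hs : s ≠ 0) (B : Set ℝ) (hB : volume B = 0) :
    volume {α : ℝ | c + s * (cos α * p - sin α * q) ∈ B} = 0 := by
  have h0 : volume {α : ℝ | sin α * p + cos α * q = 0} = 0 := by
    refine measure_mono_null ?_
      (aux_null_preimage (fun α => sin α * p + cos α * q) {0} (by simp))
    intro α hα
    refine ⟨hα, cos α * p + -sin α * q, ?_,
      ((hasDerivAt_sin α).mul_const _).add ((hasDerivAt_cos α).mul_const _)⟩
    intro h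
    have hα' : sin α * p + cos α * q = 0 := hα
    have := Real.sin_sq_add_cos_sq α
    have h2 : p = 0 := by
      linear_combination (-p) * this + sin α * hα' + cos α * h
    exact hp h2
  refine measure_mono_null ?_ (measure_union_null
    (aux_null_preimage (fun α => c + s * (cos α * p - sin α * q)) B hB) h0)
  intro α hα
  by_cases h : sin α * p + cos α * q = 0
  · exact Or.inr h
  left
  refine ⟨hα, s * (-sin α * p - cos α * q), ?_, ?_⟩
  · refine mul_ne_zero hs ?_
    intro h'; apply h; linarith
  · exact ((((hasDerivAt_cos α).mul_const p).sub
      ((hasDerivAt_sin α).mul_const q)).const_mul s).const_add c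

lemma aux_exists_frame {n : ℕ} (hn : 3 ≤ n) (x y : EuclideanSpace ℝ (Fin n)) (hx : ‖x‖ = 1)
    (hy : ‖y‖ = 1) (ht : |⟪x, y⟫| < 1) :
    ∃ u w : EuclideanSpace ℝ (Fin n), ∃ s : ℝ, s ≠ 0 ∧ ‖u‖ = 1 ∧ ‖w‖ = 1 ∧ ⟪u, w⟫ = 0 ∧
      ⟪x, u⟫ = 0 ∧ ⟪x, w⟫ = 0 ∧ y = ⟪x, y⟫ • x + s • u := by
  have hxx : ⟪x, x⟫ = 1 := by rw [real_inner_self_eq_norm_sq, hx]; norm_num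
  have hs2 : 0 < 1 - ⟪y, x⟫ ^ 2 := by
    rw [real_inner_comm, sub_pos, sq_lt_one_iff_abs_lt_one]; exact ht
  have hs := Real.sqrt_pos.mpr hs2
  let K : Submodule ℝ (EuclideanSpace ℝ (Fin n)) := Submodule.span ℝ {x, y}
  have hK : Kᗮ ≠ ⊥ := by
    intro h
    have h1 : Module.finrank ℝ K + Module.finrank ℝ Kᗮ
        = Module.finrank ℝ (EuclideanSpace ℝ (Fin n)) := K.finrank_add_finrank_orthogonal
    rw [h, finrank_bot, finrank_euclideanSpace_fin] at h1
    have h2 : Module.finrank ℝ K ≤ 2 := by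
      have := finrank_span_finset_le_card (R := ℝ) ({x, y} : Finset (EuclideanSpace ℝ (Fin n)))
      have h3 := Finset.card_le_two (a := x) (b := y)
      have hK2 : K = Submodule.span ℝ
          (({x, y} : Finset (EuclideanSpace ℝ (Fin n))) : Set (EuclideanSpace ℝ (Fin n))) := by
        simp [K]
      rw [hK2]
      exact this.trans h3
    omega
  obtain ⟨w0, hw0, hw0n⟩ := Submodule.exists_mem_ne_zero_of_ne_bot hK
  have hxw : ⟪x, w0⟫ = 0 := (Submodule.mem_orthogonal _ _).mp hw0 x (Submodule.subset_span (by simp))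
  have hyw : ⟪y, w0⟫ = 0 := (Submodule.mem_orthogonal _ _).mp hw0 y (Submodule.subset_span (by simp))
  refine ⟨projZ x y, ‖w0‖⁻¹ • w0, √(1 - ⟪y, x⟫ ^ 2), hs.ne', ?_, ?_, ?_, aux_proj_orth x y hx, ?_, ?_⟩
  · unfold projZ
    rw [norm_smul, norm_inv, norm_norm, aux_norm_proj x y hx hy]
    exact inv_mul_cancel₀ hs.ne'
  · rw [norm_smul, norm_inv, norm_norm, inv_mul_cancel₀ (norm_ne_zero_iff.mpr hw0n)]
  · simp [projZ, inner_smul_left, inner_smul_right, inner_sub_left, hxw, hyw]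
  · simp [inner_smul_right, hxw]
  · unfold projZ
    rw [aux_norm_proj x y hx hy, smul_smul, mul_inv_cancel₀ hs.ne', real_inner_comm x y]
    module

/-- The law of the angle between projections is absolutely continuous. -/
lemma AuxSph.proj_ac {n : ℕ} {ν : Measure (EuclideanSpace ℝ (Fin n))} (h : AuxSph ν)
    (hn : 3 ≤ n) (x y : EuclideanSpace ℝ (Fin n)) (hx : ‖x‖ = 1) (hy : ‖y‖ = 1)
    (ht : |⟪x, y⟫| < 1) (B : Set ℝ) (hB : volume B = 0) :
    ∀ᵐ z ∂ν, ⟪projZ z x, projZ z y⟫ ∉ B := by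
  have := h.prob
  have hn2 : 2 ≤ n := by omega
  obtain ⟨u, w, s, hs, hu, hw, huw, hxu, hxw, hyy⟩ := aux_exists_frame hn x y hx hy ht
  set t := ⟪x, y⟫ with htdef
  have huu : ⟪u, u⟫ = 1 := by rw [real_inner_self_eq_norm_sq, hu]; norm_num
  let B' := toMeasurable volume B
  have hB' : volume B' = 0 := by rw [measure_toMeasurable, hB]
  have hB'm : MeasurableSet B' := measurableSet_toMeasurable _ _
  let φ : ℝ → ℝ → ℝ := fun a b => (√(1 - a ^ 2))⁻¹ * (√(1 - b ^ 2))⁻¹ * (t - a * b)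
  let bb : EuclideanSpace ℝ (Fin n) → ℝ → ℝ := fun z α =>
    t * ⟪x, z⟫ + s * (cos α * ⟪u, z⟫ - sin α * ⟪w, z⟫)
  have hrot : ∀ α, ∃ A : EuclideanSpace ℝ (Fin n) ≃ₗᵢ[ℝ] EuclideanSpace ℝ (Fin n), ∀ z,
      ⟪x, A z⟫ = ⟪x, z⟫ ∧ ⟪y, A z⟫ = bb z α := by
    intro α
    obtain ⟨A, hA⟩ := aux_exists_rot u w hu hw huw α
    refine ⟨A, fun z => ?_⟩
    have e1 : ⟪x, A z⟫ = ⟪x, z⟫ := by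
      rw [hA]; simp [inner_add_right, inner_smul_right, hxu, hxw]
    refine ⟨e1, ?_⟩
    rw [hyy, inner_add_left, inner_smul_left, inner_smul_left, e1, hA]
    simp only [inner_add_right, inner_smul_right, huu, huw, conj_trivial, bb]
    ring
  have hmain : ∀ᵐ z ∂ν, ∀ᵐ α ∂(volume : Measure ℝ), φ ⟪x, z⟫ (bb z α) ∉ B' := by
    filter_upwards [h.norm, h.ae_inner hn2 x hx 0, h.ae_inner hn2 x hx 1,
      h.ae_inner hn2 x hx (-1), h.abs_inner_le x hx, h.ae_inner hn2 u hu 0]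
      with z hz ha0 ha1 ha2 ha3 hp
    have ha : |⟪x, z⟫| < 1 := by
      rw [abs_le] at ha3
      rw [abs_lt]
      exact ⟨lt_of_le_of_ne ha3.1 ha2.symm, lt_of_le_of_ne ha3.2 ha1⟩
    have hN := aux_null_b ⟪x, z⟫ t ha0 ha B' hB'
    have hN2 : volume ({1, -1} : Set ℝ) = 0 := (Set.toFinite _).measure_zero _
    have hfin := aux_null_alpha ⟪u, z⟫ ⟪w, z⟫ (t * ⟪x, z⟫) s hp hs _ (measure_union_null hN hN2)
    refine measure_mono_null ?_ hfin
    intro α hα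
    have hα' : φ ⟪x, z⟫ (bb z α) ∈ B' := by simpa using hα
    obtain ⟨A, hA⟩ := hrot α
    have hb1 : |bb z α| ≤ 1 := by
      rw [← (hA z).2]
      have := abs_real_inner_le_norm y (A z)
      rwa [hy, A.norm_map, hz, one_mul] at this
    rcases hb1.lt_or_eq with hlt | heq
    · exact Or.inl ⟨hlt, hα'⟩
    · right
      rcases eq_or_eq_neg_of_abs_eq heq with h1 | h1
      · left; exact h1
      · right; exact h1
  have hmeas : MeasurableSet {q : EuclideanSpace ℝ (Fin n) × ℝ | φ ⟪x, q.1⟫ (bb q.1 q.2) ∉ B'} := by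
    have : Measurable (fun q : EuclideanSpace ℝ (Fin n) × ℝ => φ ⟪x, q.1⟫ (bb q.1 q.2)) := by
      simp only [φ, bb]; fun_prop
    exact this hB'm.compl
  rw [Measure.ae_ae_comm hmeas] at hmain
  obtain ⟨α, hα⟩ := hmain.exists
  obtain ⟨A, hA⟩ := hrot α
  have h2 : ∀ᵐ z ∂ν, φ ⟪x, z⟫ ⟪y, z⟫ ∉ B' := by
    have hm2 : MeasurableSet {z : EuclideanSpace ℝ (Fin n) | φ ⟪x, z⟫ ⟪y, z⟫ ∉ B'} := by
      have : Measurable (fun z : EuclideanSpace ℝ (Fin n) => φ ⟪x, z⟫ ⟪y, z⟫) := by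
        simp only [φ]; fun_prop
      exact this hB'm.compl
    rw [← h.inv A]
    refine (ae_map_iff A.continuous.measurable.aemeasurable hm2).mpr ?_
    filter_upwards [hα] with z hz
    rw [(hA z).1, (hA z).2]
    exact hz
  filter_upwards [h2, h.norm] with z hz hz1 hzB
  apply hz
  rw [aux_inner_proj z x y hz1 hx hy] at hzB
  exact subset_toMeasurable _ _ hzB

lemma AuxSph.proj_meas {n : ℕ} {ν : Measure (EuclideanSpace ℝ (Fin n))} (h : AuxSph ν)
    (hn : 3 ≤ n) (x y : EuclideanSpace ℝ (Fin n)) (hx : ‖x‖ = 1) (hy : ‖y‖ = 1) (g : ℝ → ℝ)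
    (hgm : AEStronglyMeasurable g (volume.restrict (Set.Ioo (-1 : ℝ) 1))) :
    AEStronglyMeasurable (fun z => g ⟪projZ z x, projZ z y⟫) ν := by
  have hn2 : 2 ≤ n := by omega
  have hle : |⟪x, y⟫| ≤ 1 := by
    have := abs_real_inner_le_norm x y
    rwa [hx, hy, one_mul] at this
  have hnorm : ∀ x : EuclideanSpace ℝ (Fin n), ‖x‖ = 1 → ∀ᵐ z ∂ν, ‖projZ z x‖ = 1 := by
    intro x hx
    filter_upwards [h.norm, h.ae_inner hn2 x hx 1, h.ae_inner hn2 x hx (-1)] with z h1 h2 h3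
    exact aux_norm_projZ z x h1 hx h2 h3
  rcases hle.lt_or_eq with hlt | heq
  · let g' := hgm.mk g
    have hg' : StronglyMeasurable g' := hgm.stronglyMeasurable_mk
    have hae := hgm.ae_eq_mk
    rw [Filter.EventuallyEq, ae_restrict_iff' measurableSet_Ioo] at hae
    have hB : volume ({s | ¬ (s ∈ Set.Ioo (-1 : ℝ) 1 → g s = g' s)} ∪ {1, -1}) = 0 :=
      measure_union_null hae ((Set.toFinite _).measure_zero _)
    have hφ : Measurable (fun z => ⟪projZ z x, projZ z y⟫) := by
      unfold projZ; fun_prop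
    refine ⟨fun z => g' ⟪projZ z x, projZ z y⟫, hg'.comp_measurable hφ, ?_⟩
    filter_upwards [h.proj_ac hn x y hx hy hlt _ hB, hnorm x hx, hnorm y hy] with z hz h1 h2
    have h3 := abs_real_inner_le_norm (projZ z x) (projZ z y)
    rw [h1, h2, one_mul, abs_le] at h3
    simp only [Set.mem_union, Set.mem_ofPred_eq, Set.mem_insert_iff, Set.mem_singleton_iff,
      not_or, not_not] at hz
    exact hz.1 ⟨lt_of_le_of_ne h3.1 (Ne.symm hz.2.2), lt_of_le_of_ne h3.2 hz.2.1⟩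
  · rcases eq_or_eq_neg_of_abs_eq heq with h1 | h1
    · have hxy : x = y := (inner_eq_one_iff_of_norm_eq_one hx hy).mp h1
      subst hxy
      refine (aestronglyMeasurable_const (b := g 1)).congr ?_
      filter_upwards [hnorm x hx] with z hz
      rw [real_inner_self_eq_norm_sq, hz]; norm_num
    · have hxy : x = -y := (inner_eq_neg_one_iff_of_norm_eq_one hx hy).mp h1
      subst hxy
      refine (aestronglyMeasurable_const (b := g (-1))).congr ?_
      filter_upwards [hnorm y hy] with z hz
      have : projZ z (-y) = -projZ z y := by
        unfold projZ
        rw [inner_neg_left, neg_smul, ← neg_sub', norm_neg, smul_neg]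
      rw [this, inner_neg_left, real_inner_self_eq_norm_sq, hz]; norm_num


lemma aux_pointwise {n : ℕ} (hn : 3 ≤ n) (g : ℝ → ℝ) (g0 : ℝ)
    (hmean : ∀ (M : ℕ) (w : Fin M → EuclideanSpace ℝ (Fin (n - 1))) (c : Fin M → ℝ),
      (∀ i, ‖w i‖ = 1) → g0 * (∑ i, c i) ^ 2 ≤ ∑ i, ∑ j, c i * c j * g ⟪w i, w j⟫)
    (M : ℕ) (p : Fin M → EuclideanSpace ℝ (Fin n)) (c : Fin M → ℝ)
    (z : EuclideanSpace ℝ (Fin n)) (hz : ‖z‖ = 1) (hp : ∀ i, ‖p i‖ = 1)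
    (hpz : ∀ i, ⟪z, p i⟫ = 0) :
    g0 * (∑ i, c i) ^ 2 ≤ ∑ i, ∑ j, c i * c j * g ⟪p i, p j⟫ := by
  have hz0 : z ≠ 0 := by intro h; rw [h, norm_zero] at hz; norm_num at hz
  have hfact : Fact (Module.finrank ℝ (EuclideanSpace ℝ (Fin n)) = (n - 1) + 1) :=
    ⟨by rw [finrank_euclideanSpace_fin]; omega⟩
  have hfr : Module.finrank ℝ (ℝ ∙ z)ᗮ = n - 1 := Submodule.finrank_orthogonal_span_singleton hz0
  let L := ((stdOrthonormalBasis ℝ (ℝ ∙ z)ᗮ).reindex (finCongr hfr)).repr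
  have hmem : ∀ i, p i ∈ (ℝ ∙ z)ᗮ := fun i => by
    rw [Submodule.mem_orthogonal_singleton_iff_inner_right]; exact hpz i
  have h := hmean M (fun i => L ⟨p i, hmem i⟩) c (fun i => by
    rw [L.norm_map]; exact hp i)
  simpa only [L.inner_map_map, Submodule.coe_inner] using h

lemma aux_code_bound {n : ℕ} (hn : 3 ≤ n) (θ : ℝ)
    (g : ℝ → ℝ) (hg : PosSemidefOnSphere (n - 1) g)
    (hgm : AEStronglyMeasurable g (volume.restrict (Set.Ioo (-1 : ℝ) 1))) (g0 : ℝ)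
    (hg0 : 0 ≤ g0)
    (hmean : ∀ (M : ℕ) (w : Fin M → EuclideanSpace ℝ (Fin (n - 1))) (c : Fin M → ℝ),
      (∀ i, ‖w i‖ = 1) → g0 * (∑ i, c i) ^ 2 ≤ ∑ i, ∑ j, c i * c j * g ⟪w i, w j⟫)
    (F : ℝ → ℝ) (hFmeas : Measurable F) (CF : ℝ) (hFbd : ∀ t, |F t| ≤ CF)
    (ν : Measure (EuclideanSpace ℝ (Fin n))) (h : AuxSph ν)
    (hH : ∀ x y : EuclideanSpace ℝ (Fin n), ‖x‖ = 1 → ‖y‖ = 1 → ⟪x, y⟫ ≤ Real.cos θ →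
      (∫ z, F ⟪x, z⟫ * F ⟪y, z⟫ * g ⟪projZ z x, projZ z y⟫ ∂ν) ≤ 0)
    (EF EF2 : ℝ) (hEF : ∀ x : EuclideanSpace ℝ (Fin n), ‖x‖ = 1 → ∫ z, F ⟪x, z⟫ ∂ν = EF)
    (hEF2 : ∀ x : EuclideanSpace ℝ (Fin n), ‖x‖ = 1 → ∫ z, F ⟪x, z⟫ ^ 2 ∂ν = EF2)
    (M : ℕ) (x : Fin M → EuclideanSpace ℝ (Fin n)) (hx : ∀ i, ‖x i‖ = 1)
    (hxx : ∀ i j, i ≠ j → ⟪x i, x j⟫ ≤ Real.cos θ) :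
    g0 * ((M : ℝ) * EF) ^ 2 ≤ (M : ℝ) * (g 1 * EF2) := by
  have := h.prob
  have hn2 : 2 ≤ n := by omega
  have hnorm : ∀ i, ∀ᵐ z ∂ν, ‖projZ z (x i)‖ = 1 := by
    intro i
    filter_upwards [h.norm, h.ae_inner hn2 (x i) (hx i) 1, h.ae_inner hn2 (x i) (hx i) (-1)]
      with z h1 h2 h3
    exact aux_norm_projZ z (x i) h1 (hx i) h2 h3
  have hnorm' : ∀ᵐ z ∂ν, ∀ i, ‖projZ z (x i)‖ = 1 := ae_all_iff.mpr hnorm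
  have hCF : 0 ≤ CF := (abs_nonneg _).trans (hFbd 0)
  have hFm : ∀ i, Measurable (fun z : EuclideanSpace ℝ (Fin n) => F ⟪x i, z⟫) := fun i =>
    hFmeas.comp (by fun_prop)
  let K : Fin M → Fin M → EuclideanSpace ℝ (Fin n) → ℝ := fun i j z =>
    F ⟪x i, z⟫ * F ⟪x j, z⟫ * g ⟪projZ z (x i), projZ z (x j)⟫
  have hKint : ∀ i j, Integrable (K i j) ν := by
    intro i j
    refine Integrable.of_bound (C := CF * CF * g 1)
      (((hFm i).mul (hFm j)).aestronglyMeasurable.mul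
        (h.proj_meas hn (x i) (x j) (hx i) (hx j) g hgm)) ?_
    filter_upwards [hnorm i, hnorm j] with z h1 h2
    have h3 := abs_real_inner_le_norm (projZ z (x i)) (projZ z (x j))
    rw [h1, h2, one_mul] at h3
    have h4 := aux_psd_bound (by omega) g hg _ h3
    simp only [K, norm_mul, Real.norm_eq_abs]
    gcongr
    · exact hFbd _
    · exact hFbd _
  let f : EuclideanSpace ℝ (Fin n) → ℝ := fun z => ∑ i, F ⟪x i, z⟫
  have hFi : ∀ i, Integrable (fun z => F ⟪x i, z⟫) ν := fun i =>
    Integrable.of_bound (C := CF) (hFm i).aestronglyMeasurable (Eventually.of_forall fun z => hFbd _)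
  have hfi : Integrable f ν := integrable_finsetSum _ fun i _ => hFi i
  have hfm : Measurable f := Finset.measurable_sum _ fun i _ => hFm i
  have hf2 : Integrable (fun z => f z ^ 2) ν := by
    refine Integrable.of_bound (C := (∑ _i : Fin M, CF) ^ 2) (hfm.pow_const 2).aestronglyMeasurable
      (Eventually.of_forall fun z => ?_)
    rw [norm_pow]
    gcongr
    exact (norm_sum_le _ _).trans (Finset.sum_le_sum fun i _ => hFbd _)
  have hfE : ∫ z, f z ∂ν = (M : ℝ) * EF := by
    simp only [f]
    rw [integral_finsetSum _ fun i _ => hFi i, Finset.sum_congr rfl fun i _ => hEF (x i) (hx i)]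
    simp
  have hjensen : (∫ z, f z ∂ν) ^ 2 ≤ ∫ z, f z ^ 2 ∂ν := by
    set c := ∫ z, f z ∂ν with hc
    have h1 : 0 ≤ ∫ z, (f z - c) ^ 2 ∂ν := integral_nonneg fun z => sq_nonneg _
    have h2 : ∀ z, (f z - c) ^ 2 = f z ^ 2 - 2 * c * f z + c ^ 2 := fun z => by ring
    simp_rw [h2] at h1
    have hi2 : Integrable (fun z => f z ^ 2 - 2 * c * f z) ν := hf2.sub (hfi.const_mul _)
    rw [integral_add hi2 (integrable_const _),
      integral_sub hf2 (hfi.const_mul _), integral_const_mul, ← hc] at h1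
    simp only [integral_const, probReal_univ, smul_eq_mul, one_mul] at h1
    nlinarith
  have hlow : ∫ z, g0 * f z ^ 2 ∂ν ≤ ∫ z, ∑ i, ∑ j, K i j z ∂ν := by
    refine integral_mono_ae (hf2.const_mul _)
      (integrable_finsetSum _ fun i _ => integrable_finsetSum _ fun j _ => hKint i j) ?_
    filter_upwards [h.norm, hnorm'] with z hz hz'
    exact aux_pointwise hn g g0 hmean M (fun i => projZ z (x i)) (fun i => F ⟪x i, z⟫) z hz hz'
      (fun i => aux_proj_orth z (x i) hz)
  rw [integral_const_mul, integral_finsetSum _ fun i _ => integrable_finsetSum _ fun j _ =>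
    hKint i j] at hlow
  have hup : ∀ i, ∫ z, ∑ j, K i j z ∂ν ≤ g 1 * EF2 := by
    intro i
    rw [integral_finsetSum _ fun j _ => hKint i j,
      ← Finset.add_sum_erase _ _ (Finset.mem_univ i)]
    have h1 : ∫ z, K i i z ∂ν = g 1 * EF2 := by
      rw [← hEF2 (x i) (hx i), ← integral_const_mul]
      refine integral_congr_ae ?_
      filter_upwards [hnorm i] with z hz
      simp only [K]
      rw [real_inner_self_eq_norm_sq, hz]
      norm_num
      ring
    have h2 : ∑ j ∈ Finset.univ.erase i, ∫ z, K i j z ∂ν ≤ 0 :=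
      Finset.sum_nonpos fun j hj =>
        hH (x i) (x j) (hx i) (hx j) (hxx i j (Finset.ne_of_mem_erase hj).symm)
    linarith
  have hup' : ∑ i, ∫ z, ∑ j, K i j z ∂ν ≤ (M : ℝ) * (g 1 * EF2) := by
    refine (Finset.sum_le_sum fun i _ => hup i).trans ?_
    simp
  rw [← hfE]
  exact (mul_le_mul_of_nonneg_left hjensen hg0).trans (hlow.trans hup')


/-- Proposition 3.6 of Sardari–Zargar. The Delsarte bound on `M(n, θ)`
obtained from averaging a Delsarte function `g` for `M(n-1, θ')` over `S^{n-1}`. -/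
theorem spherical_code_LP_from_projection
    (n : ℕ) (hn : 3 ≤ n) (θ θ' : ℝ) (hθ0 : 0 < θ) (hθθ' : θ < θ') (hθ' : θ' ≤ π / 2)
    (g : ℝ → ℝ) (hg : DelsarteLP (n - 1) θ' g)
    (F : ℝ → ℝ) (hFmeas : Measurable F) (CF : ℝ) (hFbd : ∀ t, |F t| ≤ CF)
    (hFne : (∫ t in (-1 : ℝ)..1, F t * (1 - t ^ 2) ^ (((n : ℝ) - 3) / 2)) ≠ 0)
    (σ : Measure (Metric.sphere (0 : EuclideanSpace ℝ (Fin n)) 1))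
    (hσ : IsInvProbSphere n σ)
    (hH : ∀ x y : EuclideanSpace ℝ (Fin n), ‖x‖ = 1 → ‖y‖ = 1 → ⟪x, y⟫ ≤ Real.cos θ →
      (∫ z, F ⟪x, (z : EuclideanSpace ℝ (Fin n))⟫ * F ⟪y, (z : EuclideanSpace ℝ (Fin n))⟫ *
          g ⟪projZ (z : EuclideanSpace ℝ (Fin n)) x,
              projZ (z : EuclideanSpace ℝ (Fin n)) y⟫ ∂σ) ≤ 0) :
    (Mcode n θ : ℝ) ≤
      (g 1 * (∫ t in (-1 : ℝ)..1, (1 - t ^ 2) ^ (((n : ℝ) - 4) / 2)) /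
          (∫ t in (-1 : ℝ)..1, g t * (1 - t ^ 2) ^ (((n : ℝ) - 4) / 2))) *
        ((∫ t in (-1 : ℝ)..1, F t ^ 2 * (1 - t ^ 2) ^ (((n : ℝ) - 3) / 2)) *
            (∫ t in (-1 : ℝ)..1, (1 - t ^ 2) ^ (((n : ℝ) - 3) / 2)) /
          (∫ t in (-1 : ℝ)..1, F t * (1 - t ^ 2) ^ (((n : ℝ) - 3) / 2)) ^ 2) := by
  have hn' : (3 : ℝ) ≤ n := by exact_mod_cast hn
  obtain ⟨hpsd, -, hgpos⟩ := hg
  have hN : 2 ≤ n - 1 := by omega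
  have hn2 : 2 ≤ n := by omega
  have hwt : ∀ t : ℝ, (1 - t ^ 2) ^ (((n : ℝ) - 4) / 2) = auxWt (n - 1) t := by
    intro t
    unfold auxWt
    rw [Nat.cast_sub (by omega)]
    congr 1
    push_cast
    ring
  have hwt2 : ∀ t : ℝ, (1 - t ^ 2) ^ (((n : ℝ) - 3) / 2) = auxWt n t := fun t => rfl
  have hwt3 : ∀ t : ℝ, (1 - t ^ 2) ^ ((((n - 1 : ℕ) : ℝ) - 3) / 2) = auxWt (n - 1) t :=
    fun t => rfl
  simp_rw [hwt3] at hgpos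
  simp_rw [hwt2] at hFne
  simp_rw [hwt, hwt2]
  have hgint : IntervalIntegrable (fun t => g t * auxWt (n - 1) t) volume (-1) 1 := by
    by_contra hcon
    rw [intervalIntegral.integral_undef hcon] at hgpos
    exact lt_irrefl _ hgpos
  rw [intervalIntegrable_iff_integrableOn_Ioo_of_le (by norm_num)] at hgint
  simp only [aux_interval] at hgpos hFne ⊢
  have hgm : AEStronglyMeasurable g (volume.restrict (Set.Ioo (-1 : ℝ) 1)) := by
    refine (hgint.aestronglyMeasurable.mul
      (auxWt_meas (n - 1)).inv.aestronglyMeasurable).congr ?_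
    refine (ae_restrict_iff' measurableSet_Ioo).mpr (Eventually.of_forall fun t ht => ?_)
    have := (auxWt_pos (n - 1) ht).ne'
    simp only [Pi.mul_apply, Pi.inv_apply]
    field_simp
  have hI := auxWt_total_pos n hn2
  have hI' := auxWt_total_pos (n - 1) hN
  have hg0pos := div_pos hgpos hI'
  obtain ⟨hg1, hmean⟩ := aux_psd_mean hN g hpsd hgm _ rfl hg0pos.le
  have hν := aux_sph_of_inv σ hσ
  have hH' : ∀ x y : EuclideanSpace ℝ (Fin n), ‖x‖ = 1 → ‖y‖ = 1 → ⟪x, y⟫ ≤ Real.cos θ →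
      (∫ z, F ⟪x, z⟫ * F ⟪y, z⟫ * g ⟪projZ z x, projZ z y⟫ ∂(σ.map Subtype.val)) ≤ 0 := by
    intro x y hx hy hxy
    rw [(MeasurableEmbedding.subtype_coe Metric.isClosed_sphere.measurableSet).integral_map]
    exact hH x y hx hy hxy
  have hEF := fun (x : EuclideanSpace ℝ (Fin n)) (hx : ‖x‖ = 1) =>
    (hν.zonal hn2 x hx F hFmeas.aestronglyMeasurable).2
  have hEF2 := fun (x : EuclideanSpace ℝ (Fin n)) (hx : ‖x‖ = 1) =>
    (hν.zonal hn2 x hx (fun t => F t ^ 2) (hFmeas.pow_const 2).aestronglyMeasurable).2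
  have hbound := aux_code_bound hn θ g hpsd hgm _ hg0pos.le hmean F hFmeas CF hFbd _ hν hH' _ _
    hEF hEF2
  have hJ2 : 0 ≤ ∫ t in Set.Ioo (-1 : ℝ) 1, F t ^ 2 * auxWt n t :=
    setIntegral_nonneg measurableSet_Ioo fun t ht =>
      mul_nonneg (sq_nonneg _) (auxWt_pos n ht).le
  have hg1pos : 0 < g 1 := hg0pos.trans_le hg1
  generalize (∫ t in Set.Ioo (-1 : ℝ) 1, F t ^ 2 * auxWt n t) = J2 at *
  generalize (∫ t in Set.Ioo (-1 : ℝ) 1, F t * auxWt n t) = J at *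
  generalize (∫ t in Set.Ioo (-1 : ℝ) 1, g t * auxWt (n - 1) t) = Jg at *
  generalize (∫ t in Set.Ioo (-1 : ℝ) 1, auxWt (n - 1) t) = I' at *
  generalize (∫ t in Set.Ioo (-1 : ℝ) 1, auxWt n t) = I at *
  set R := (g 1 * I' / Jg) * (J2 * I / J ^ 2) with hR
  have hR0 : 0 ≤ R := by positivity
  have hall : ∀ A : Finset (EuclideanSpace ℝ (Fin n)), (∀ x ∈ A, ‖x‖ = 1) →
      (∀ x ∈ A, ∀ y ∈ A, x ≠ y → ⟪x, y⟫ ≤ Real.cos θ) → (A.card : ℝ) ≤ R := by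
    intro A hA1 hA2
    rcases Nat.eq_zero_or_pos A.card with h0 | h0
    · rw [h0]; simpa using hR0
    have hb := hbound A.card (fun i => (A.equivFin.symm i : EuclideanSpace ℝ (Fin n)))
      (fun i => hA1 _ (A.equivFin.symm i).2)
      (fun i j hij => hA2 _ (A.equivFin.symm i).2 _ (A.equivFin.symm j).2 (fun he =>
        hij (A.equivFin.symm.injective (Subtype.ext he))))
    have hM : (0 : ℝ) < A.card := by exact_mod_cast h0
    generalize (A.card : ℝ) = m at *
    have hJ : 0 < J ^ 2 := by positivity
    have e : R = m * (g 1 * (J2 / I)) / (m * (Jg / I' * (J / I) ^ 2)) := by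
      rw [hR]; field_simp
    rw [e, le_div_iff₀ (by positivity)]
    calc m * (m * (Jg / I' * (J / I) ^ 2)) = Jg / I' * (m * (J / I)) ^ 2 := by ring
      _ ≤ _ := hb
  have hfl : Mcode n θ ≤ ⌊R⌋₊ := by
    unfold Mcode
    refine csSup_le ⟨0, ∅, by simp⟩ ?_
    rintro N ⟨A, rfl, hA1, hA2⟩
    exact Nat.le_floor (hall A hA1 hA2)
  exact (Nat.le_floor_iff hR0).mp hfl
end
end

section
/- Fix integers 1 ≤ m ≤ n−2, an integrable F:[−1,1]^m→ℝ, orthonormal vectors z_1,…,z_m ∈ S^{n−1}, and g:[−1,1]→ℝ positive semi-definite on S^{n−m−1}. Then for any finite set x_1,…,x_N ∈ S^{n−1} with no x_i lying in span(z_1,…,z_m) and any reals c_1,…,c_N, one has Σ_{i,j} c_i c_j h(x_i,x_j;z_1,…,z_m) ≥ 0. In particular, the averaged function H is positive semi-definite on S^{n−1}: for any finite x_1,…,x_N ∈ S^{n−1} the matrix [H(x_i,x_j)]_{i,j} is positive semi-definite. -/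
open MeasureTheory Filter Real
open scoped RealInnerProductSpace

noncomputable section

/-- The Stiefel manifold of orthonormal `m`-frames in `ℝ^n`. -/
abbrev Stiefel (n m : ℕ) : Type :=
  {z : Fin m → EuclideanSpace ℝ (Fin n) // Orthonormal ℝ z}

/-- Action of a linear isometry on frames. -/
def frameMap {n m : ℕ} (A : EuclideanSpace ℝ (Fin n) ≃ₗᵢ[ℝ] EuclideanSpace ℝ (Fin n))
    (z : Stiefel n m) : Stiefel n m :=
  ⟨fun i => A (z.1 i), z.2.comp_linearIsometry A.toLinearIsometry⟩

/-- `ν` is an `O(n)`-invariant probability measure on the Stiefel manifold. -/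
def IsInvProb {n m : ℕ} (ν : Measure (Stiefel n m)) : Prop :=
  IsProbabilityMeasure ν ∧
    ∀ A : EuclideanSpace ℝ (Fin n) ≃ₗᵢ[ℝ] EuclideanSpace ℝ (Fin n),
      Measure.map (frameMap A) ν = ν

/-- Normalized projection of `x` onto the orthogonal complement of `span (z 1, …, z m)`. -/
def projC {n m : ℕ} (z : Fin m → EuclideanSpace ℝ (Fin n)) (x : EuclideanSpace ℝ (Fin n)) :
    EuclideanSpace ℝ (Fin n) :=
  ‖x - ∑ i, ⟪x, z i⟫ • z i‖⁻¹ • (x - ∑ i, ⟪x, z i⟫ • z i)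

/-- The integrand `h(x, y; z₁, …, z_m)`. -/
def hfun {n m : ℕ} (F : (Fin m → ℝ) → ℝ) (g : ℝ → ℝ)
    (x y : EuclideanSpace ℝ (Fin n)) (z : Fin m → EuclideanSpace ℝ (Fin n)) : ℝ :=
  F (fun i => ⟪x, z i⟫) * F (fun i => ⟪y, z i⟫) * g ⟪projC z x, projC z y⟫

/-- The Stiefel average `H(x,y)`. -/
def Hfun {n m : ℕ} (ν : Measure (Stiefel n m)) (F : (Fin m → ℝ) → ℝ) (g : ℝ → ℝ)
    (x y : EuclideanSpace ℝ (Fin n)) : ℝ :=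
  ∫ z, hfun F g x y z.1 ∂ν

/-- Unnormalized projection on the orthogonal complement. -/
def resid {n m : ℕ} (z : Fin m → EuclideanSpace ℝ (Fin n)) (x : EuclideanSpace ℝ (Fin n)) :
    EuclideanSpace ℝ (Fin n) := x - ∑ i, ⟪x, z i⟫ • z i

lemma sum_mem_span {n m : ℕ} (z : Fin m → EuclideanSpace ℝ (Fin n))
    (x : EuclideanSpace ℝ (Fin n)) :
    ∑ i, ⟪x, z i⟫ • z i ∈ Submodule.span ℝ (Set.range z) :=
  Submodule.sum_mem _ fun i _ => Submodule.smul_mem _ _ (Submodule.subset_span ⟨i, rfl⟩)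

lemma resid_mem {n m : ℕ} (z : Fin m → EuclideanSpace ℝ (Fin n)) (hz : Orthonormal ℝ z)
    (x : EuclideanSpace ℝ (Fin n)) : resid z x ∈ (Submodule.span ℝ (Set.range z))ᗮ := by
  have key : Submodule.span ℝ (Set.range z) ≤ (ℝ ∙ resid z x)ᗮ := by
    rw [Submodule.span_le]
    rintro _ ⟨j, rfl⟩
    rw [SetLike.mem_coe, Submodule.mem_orthogonal_singleton_iff_inner_left, resid, inner_sub_right,
      hz.inner_right_fintype, real_inner_comm, sub_self]
  rw [Submodule.mem_orthogonal]
  intro u hu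
  exact Submodule.mem_orthogonal_singleton_iff_inner_left.1 (key hu)

lemma resid_eq_zero_iff {n m : ℕ} (z : Fin m → EuclideanSpace ℝ (Fin n)) (hz : Orthonormal ℝ z)
    (x : EuclideanSpace ℝ (Fin n)) :
    resid z x = 0 ↔ x ∈ Submodule.span ℝ (Set.range z) := by
  constructor
  · intro h
    rw [sub_eq_zero.1 h]
    exact sum_mem_span z x
  · intro h
    have h1 : resid z x ∈ Submodule.span ℝ (Set.range z) := Submodule.sub_mem _ h (sum_mem_span z x)
    have h2 := (Submodule.mem_orthogonal _ _).1 (resid_mem z hz x) _ h1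
    exact inner_self_eq_zero.1 h2

lemma part_one {n m : ℕ} (F : (Fin m → ℝ) → ℝ) (g : ℝ → ℝ)
    (hgpsd : PosSemidefOnSphere (n - m) g)
    (z : Stiefel n m) (N : ℕ) (x : Fin N → EuclideanSpace ℝ (Fin n)) (c : Fin N → ℝ)
    (hx : ∀ i, x i ∉ Submodule.span ℝ (Set.range z.1)) :
    0 ≤ ∑ i, ∑ j, c i * c j * hfun F g (x i) (x j) z.1 := by
  set W := (Submodule.span ℝ (Set.range z.1))ᗮ with hW
  have hd : Module.finrank ℝ W = n - m := by
    have h1 := Submodule.finrank_add_finrank_orthogonal (Submodule.span ℝ (Set.range z.1))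
    have h2 := finrank_span_eq_card z.2.linearIndependent
    rw [h2, finrank_euclideanSpace, Fintype.card_fin, Fintype.card_fin, ← hW] at h1
    omega
  let b := (stdOrthonormalBasis ℝ W).reindex (finCongr hd)
  have hmem : ∀ i, projC z.1 (x i) ∈ W := fun i =>
    Submodule.smul_mem _ _ (resid_mem z.1 z.2 (x i))
  have hnorm : ∀ i, ‖projC z.1 (x i)‖ = 1 := by
    intro i
    have h0 : resid z.1 (x i) ≠ 0 := fun h => hx i ((resid_eq_zero_iff z.1 z.2 _).1 h)
    exact norm_smul_inv_norm (𝕜 := ℝ) h0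
  have := hgpsd N (fun i => b.repr ⟨_, hmem i⟩) (fun i => c i * F (fun k => ⟪x i, z.1 k⟫))
    (fun i => by rw [LinearIsometryEquiv.norm_map]; exact hnorm i)
  refine this.trans_eq ?_
  refine Finset.sum_congr rfl fun i _ => Finset.sum_congr rfl fun j _ => ?_
  rw [LinearIsometryEquiv.inner_map_map, Submodule.coe_inner, hfun]
  ring

lemma continuous_resid {n m : ℕ} :
    Continuous fun p : Stiefel n m × EuclideanSpace ℝ (Fin n) => resid p.1.1 p.2 := by
  have h : ∀ i, Continuous fun p : Stiefel n m × EuclideanSpace ℝ (Fin n) => p.1.1 i := fun i =>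
    (continuous_apply i).comp (continuous_subtype_val.comp continuous_fst)
  unfold resid
  exact continuous_snd.sub (continuous_finsetSum _ fun i _ =>
    Continuous.smul (continuous_snd.inner (𝕜 := ℝ) (h i)) (h i))

lemma continuous_frameMap {n m : ℕ}
    (A : EuclideanSpace ℝ (Fin n) ≃ₗᵢ[ℝ] EuclideanSpace ℝ (Fin n)) :
    Continuous (frameMap (m := m) A) := by
  refine Continuous.subtype_mk (continuous_pi fun i => ?_) _
  exact A.continuous.comp ((continuous_apply i).comp continuous_subtype_val)

lemma resid_frameMap {n m : ℕ}
    (A : EuclideanSpace ℝ (Fin n) ≃ₗᵢ[ℝ] EuclideanSpace ℝ (Fin n)) (z : Stiefel n m)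
    (x : EuclideanSpace ℝ (Fin n)) : resid (frameMap A z).1 (A x) = A (resid z.1 x) := by
  simp [resid, frameMap]

lemma measurableSet_resid {n m : ℕ} (x : EuclideanSpace ℝ (Fin n)) :
    MeasurableSet {z : Stiefel n m | resid z.1 x = 0} := by
  have : Continuous fun z : Stiefel n m => resid z.1 x :=
    continuous_resid.comp (continuous_id.prodMk continuous_const)
  exact (isClosed_eq this continuous_const).measurableSet

lemma null_resid {n m : ℕ} (hmn : m < n) (ν : Measure (Stiefel n m)) (hν : IsInvProb ν)
    (y : EuclideanSpace ℝ (Fin n)) (hy : ‖y‖ = 1) :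
    ν {z : Stiefel n m | resid z.1 y = 0} = 0 := by
  haveI := hν.1
  haveI : Nonempty (Fin n) := ⟨⟨0, by omega⟩⟩
  have hS : MeasurableSet {p : Stiefel n m × EuclideanSpace ℝ (Fin n) | resid p.1.1 p.2 = 0} :=
    (isClosed_eq continuous_resid continuous_const).measurableSet
  have h0 : (ν.prod (volume : Measure (EuclideanSpace ℝ (Fin n))))
      {p : Stiefel n m × EuclideanSpace ℝ (Fin n) | resid p.1.1 p.2 = 0} = 0 := by
    rw [Measure.measure_prod_null hS]
    refine Filter.Eventually.of_forall fun z => ?_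
    have h1 : Submodule.span ℝ (Set.range z.1) ≠ ⊤ := by
      intro h
      have h2 := finrank_span_eq_card z.2.linearIndependent
      rw [h, finrank_top, finrank_euclideanSpace, Fintype.card_fin, Fintype.card_fin] at h2
      omega
    have h3 := Measure.addHaar_submodule (volume : Measure (EuclideanSpace ℝ (Fin n))) _ h1
    refine Eq.trans (congrArg _ ?_) h3
    ext x
    exact resid_eq_zero_iff z.1 z.2 x
  have h0s : ((volume : Measure (EuclideanSpace ℝ (Fin n))).prod ν)
      (Prod.swap ⁻¹' {p : Stiefel n m × EuclideanSpace ℝ (Fin n) | resid p.1.1 p.2 = 0}) = 0 := by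
    rw [← Measure.map_apply measurable_swap hS, Measure.prod_swap]
    exact h0
  have h1 := Measure.measure_ae_null_of_prod_null h0s
  have h2 : ∀ᵐ x ∂(volume : Measure (EuclideanSpace ℝ (Fin n))), x ≠ 0 := by
    haveI : Nontrivial (EuclideanSpace ℝ (Fin n)) := ⟨y, 0, fun h => by simp [h] at hy⟩
    exact Measure.ae_ne _ _
  obtain ⟨x, hx, hx0⟩ := (h1.and h2).exists
  have hx' : ν {z : Stiefel n m | resid z.1 x = 0} = 0 := hx
  have hu : ‖‖x‖⁻¹ • x‖ = ‖y‖ := by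
    rw [hy]
    exact norm_smul_inv_norm (𝕜 := ℝ) hx0
  let A := (ℝ ∙ (‖x‖⁻¹ • x - y))ᗮ.reflection
  have hA : A (‖x‖⁻¹ • x) = y := Submodule.reflection_sub hu
  rw [← hν.2 A, Measure.map_apply (continuous_frameMap A).measurable (measurableSet_resid y)]
  refine Eq.trans (congrArg _ ?_) hx'
  ext z
  have hs : resid z.1 (‖x‖⁻¹ • x) = ‖x‖⁻¹ • resid z.1 x := by
    simp [resid, smul_sub, Finset.smul_sum, inner_smul_left, smul_smul]
  have hxn : ‖x‖ ≠ 0 := norm_ne_zero_iff.2 hx0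
  change resid (frameMap A z).1 y = 0 ↔ resid z.1 x = 0
  rw [← hA, resid_frameMap, hs]
  simp [hxn]

/-- Positive semi-definiteness of `h` and of the Stiefel average `H`. -/
theorem stiefel_average_pos_semidef
    (n m : ℕ) (hm : 1 ≤ m) (hmn : m ≤ n - 2) (hn : 2 ≤ n)
    (F : (Fin m → ℝ) → ℝ) (hF : Measurable F) (g : ℝ → ℝ) (hg : Measurable g)
    (hgpsd : PosSemidefOnSphere (n - m) g) :
    (∀ (z : Stiefel n m) (N : ℕ) (x : Fin N → EuclideanSpace ℝ (Fin n)) (c : Fin N → ℝ),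
        (∀ i, ‖x i‖ = 1) →
        (∀ i, x i ∉ Submodule.span ℝ (Set.range z.1)) →
        0 ≤ ∑ i, ∑ j, c i * c j * hfun F g (x i) (x j) z.1) ∧
    (∀ ν : Measure (Stiefel n m), IsInvProb ν →
      (∀ x y : EuclideanSpace ℝ (Fin n), ‖x‖ = 1 → ‖y‖ = 1 →
          Integrable (fun z : Stiefel n m => hfun F g x y z.1) ν) →
      ∀ (N : ℕ) (x : Fin N → EuclideanSpace ℝ (Fin n)) (c : Fin N → ℝ),
        (∀ i, ‖x i‖ = 1) →
        0 ≤ ∑ i, ∑ j, c i * c j * Hfun ν F g (x i) (x j)) := by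
  refine ⟨fun z N x c _ hx => part_one F g hgpsd z N x c hx, ?_⟩
  intro ν hν hint N x c hx
  have hae : ∀ᵐ z ∂ν, 0 ≤ ∑ i, ∑ j, c i * c j * hfun F g (x i) (x j) z.1 := by
    have h : ∀ᵐ z ∂ν, ∀ i, resid z.1 (x i) ≠ 0 := by
      rw [ae_all_iff]
      intro i
      rw [ae_iff]
      simpa using null_resid (by omega) ν hν (x i) (hx i)
    filter_upwards [h] with z hz
    exact part_one F g hgpsd z N x c fun i hi => hz i ((resid_eq_zero_iff z.1 z.2 _).2 hi)
  refine (integral_nonneg_of_ae hae).trans_eq ?_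
  have hi : ∀ i j, Integrable (fun z : Stiefel n m => c i * c j * hfun F g (x i) (x j) z.1) ν :=
    fun i j => (hint _ _ (hx i) (hx j)).const_mul _
  rw [integral_finsetSum _ fun i _ => integrable_finsetSum _ fun j _ => hi i j]
  refine Finset.sum_congr rfl fun i _ => ?_
  rw [integral_finsetSum _ fun j _ => hi i j]
  refine Finset.sum_congr rfl fun j _ => ?_
  rw [integral_const_mul, Hfun]
end
end
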